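/- Let a ∈ Z_{≥2}, d ≥ 5 and n ≥ 4. If a is sufficiently large in terms of d and n, then there exist f ∈ Z_{≥0} and g > 0, depending only on a, d and n, such that for every n-element configuration U ⊂ Z^d, P_U(U_f ∈ 𝒰_{d,n}(a,1)) ≥ g. -/

import Mathlib

open MeasureTheory

namespace HATFormal

/-- Points of the lattice `ℤ^d`. -/
abbrev Pt (d : ℕ) := Fin d → ℤ

/-- The `2d` unit steps of the simple random walk on `ℤ^d`. -/
def Dir (d : ℕ) : Set (Pt d) :=
  {s | ∃ i : Fin d, s = Pi.single i 1 ∨ s = Pi.single i (-1)}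

/-- The position, after `t` steps, of the walk started at `x` with steps `s`. -/
def wpos (d : ℕ) (x : Pt d) {T : ℕ} (s : Fin T → Pt d) (t : ℕ) : Pt d :=
  x + ∑ i ∈ Finset.univ.filter (fun i : Fin T => (i : ℕ) < t), s i

/-- The probability of an event `P` of the first `T` steps of simple random walk on `ℤ^d`. -/
noncomputable def prob (d T : ℕ) (P : (Fin T → Pt d) → Prop) : ℝ :=
  (Nat.card {s : Fin T → Pt d // (∀ i, s i ∈ Dir d) ∧ P s} : ℝ) / ((2 * d : ℕ) : ℝ) ^ T

open Classical in
/-- `esc d A x = P_x(τ_A = ∞)` if `x ∈ A`, and `0` otherwise. -/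
noncomputable def esc (d : ℕ) (A : Set (Pt d)) (x : Pt d) : ℝ :=
  if x ∈ A then ⨅ T : ℕ, prob d T (fun s => ∀ t, 1 ≤ t → t ≤ T → wpos d x s t ∉ A) else 0

/-- The capacity of `A`. -/
noncomputable def capa (d : ℕ) (A : Set (Pt d)) : ℝ := ∑' x : A, esc d A (x : Pt d)

/-- The harmonic measure `H_A(x) = esc_A(x) / cap_A`. -/
noncomputable def harm (d : ℕ) (A : Set (Pt d)) (x : Pt d) : ℝ := esc d A x / capa d A

/-- `P_x(τ_W < ∞)`. -/
noncomputable def retProb (d : ℕ) (W : Set (Pt d)) (x : Pt d) : ℝ :=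
  ∑' t : ℕ, prob d t (fun s => 1 ≤ t ∧ wpos d x s t ∈ W ∧
    ∀ u, 1 ≤ u → u < t → wpos d x s u ∉ W)

/-- `P_x(τ_W < ∞ and S_{τ_W − 1} = y)`. -/
noncomputable def hitFrom (d : ℕ) (W : Set (Pt d)) (x y : Pt d) : ℝ :=
  ∑' t : ℕ, prob d t (fun s => 1 ≤ t ∧ wpos d x s t ∈ W ∧ wpos d x s (t - 1) = y ∧
    ∀ u, 1 ≤ u → u < t → wpos d x s u ∉ W)

/-- `P_x(τ_W < ∞ and S_{τ_W} ∈ T)`. -/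
noncomputable def firstHitIn (d : ℕ) (W T : Set (Pt d)) (x : Pt d) : ℝ :=
  ∑' t : ℕ, prob d t (fun s => 1 ≤ t ∧ wpos d x s t ∈ W ∧ wpos d x s t ∈ T ∧
    ∀ u, 1 ≤ u → u < t → wpos d x s u ∉ W)

/-- `P_x(S_{τ_W − 1} = y ∣ τ_W < ∞)`. -/
noncomputable def transP (d : ℕ) (W : Set (Pt d)) (x y : Pt d) : ℝ :=
  hitFrom d W x y / retProb d W x

/-- The Green's function of simple random walk on `ℤ^d`. -/
noncomputable def green (d : ℕ) (x : Pt d) : ℝ :=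
  ∑' t : ℕ, prob d t (fun s => wpos d x s t = 0)

/-- Configurations: finite subsets of `ℤ^d`. -/
abbrev Conf (d : ℕ) := Finset (Pt d)

/-- `p_U(x, y)`, the probability that HAT activates at `x` and transports to `y`. -/
noncomputable def pHAT (d : ℕ) (U : Conf d) (x y : Pt d) : ℝ :=
  harm d (↑U) x * transP d ((↑U : Set (Pt d)) \ {x}) x y

open Classical in
/-- The transition probabilities of HAT. -/
noncomputable def hatProb (d : ℕ) (U V : Conf d) : ℝ :=
  if V = U then ∑' z : Pt d, pHAT d U z z
  else ∑' x : Pt d, ∑' y : Pt d,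
    if x ∈ U ∧ x ≠ y ∧ V = insert y (U.erase x) then pHAT d U x y else 0

instance (d : ℕ) : MeasurableSpace (Conf d) := ⊤

/-- `μ` is the law of HAT started from `U`. -/
def IsHATLaw (d : ℕ) (U : Conf d) (μ : Measure (ℕ → Conf d)) : Prop :=
  IsProbabilityMeasure μ ∧
  ∀ (t : ℕ) (u : ℕ → Conf d),
    μ {ω | ∀ s ≤ t, ω s = u s} =
      (if u 0 = U then 1 else 0) *
        ∏ s ∈ Finset.range t, ENNReal.ofReal (hatProb d (u s) (u (s + 1)))

/-- A signed permutation plus translation of `ℤ^d`. -/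
def SymImage (d : ℕ) (σ : Equiv.Perm (Fin d)) (ε : Fin d → ℤ) (v : Pt d) (x : Pt d) : Pt d :=
  fun i => v i + ε i * x (σ i)

/-- `SymEq d U V` holds when `V = gU` for a symmetry `g` of `ℤ^d`. -/
def SymEq (d : ℕ) (U V : Conf d) : Prop :=
  ∃ (σ : Equiv.Perm (Fin d)) (ε : Fin d → ℤ) (v : Pt d),
    (∀ i, ε i = 1 ∨ ε i = -1) ∧ V = U.image (SymImage d σ ε v)

/-- Euclidean distance on `ℤ^d`. -/
noncomputable def dist0 (d : ℕ) (x y : Pt d) : ℝ :=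
  Real.sqrt (∑ i, ((x i : ℝ) - (y i : ℝ)) ^ 2)

/-- Euclidean distance between finite subsets of `ℤ^d`. -/
noncomputable def setDist (d : ℕ) (A B : Finset (Pt d)) : ℝ :=
  sInf {r : ℝ | ∃ x ∈ A, ∃ y ∈ B, r = dist0 d x y}

/-- Euclidean diameter of a finite subset of `ℤ^d`. -/
noncomputable def diam0 (d : ℕ) (A : Finset (Pt d)) : ℝ :=
  sSup {r : ℝ | ∃ x ∈ A, ∃ y ∈ A, r = dist0 d x y}

/-- Lattice (nearest-neighbor) adjacency in `ℤ^d`. -/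
def latAdj (d : ℕ) (x y : Pt d) : Prop := (∑ i, (x i - y i).natAbs) = 1

/-- Exterior lattice boundary of a set. -/
def bdry (d : ℕ) (A : Set (Pt d)) : Set (Pt d) := {z | z ∉ A ∧ ∃ w ∈ A, latAdj d z w}

/-- Non-isolated configurations: some exposed element has a lattice neighbor in the set. -/
def NonIso (d : ℕ) (U : Conf d) : Prop :=
  ∃ x ∈ U, 0 < esc d (↑U) x ∧ ∃ y ∈ U, latAdj d x y

/-- `C` is a clustering (ordered partition into nonempty clusters) of `U`. -/
def IsClusteringOf (d : ℕ) {k : ℕ} (C : Fin k → Finset (Pt d)) (U : Finset (Pt d)) : Prop :=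
  (∀ i, (C i).Nonempty) ∧ (∀ i j, i ≠ j → Disjoint (C i) (C j)) ∧
    Finset.univ.biUnion C = U

/-- `C^{≠ i}`, the union of the clusters other than `i`. -/
def others (d : ℕ) {k : ℕ} (C : Fin k → Finset (Pt d)) (i : Fin k) : Finset (Pt d) :=
  Finset.univ.biUnion fun j => if j = i then ∅ else C j

/-- The separation of a clustering. -/
noncomputable def sep (d : ℕ) {k : ℕ} (C : Fin k → Finset (Pt d)) : ℝ :=
  ⨅ i, setDist d (C i) (others d C i)

/-- `(a, b)` separated dimer-or-trimer (DOT) clusterings. -/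
def IsDOT (d : ℕ) {k : ℕ} (C : Fin k → Finset (Pt d)) (a b : ℝ) : Prop :=
  (∀ i, (C i).card = 2 ∨ (C i).card = 3) ∧ a ≤ sep d C ∧
    ∀ i, diam0 d (C i) ≤ b * Real.log (setDist d (C i) (others d C i))

/-- Clusterings with an unspecified number of clusters. -/
abbrev ClusteringS (d : ℕ) := Σ k : ℕ, Fin k → Finset (Pt d)

/-- `π(C)`, the union of the clusters of `C`. -/
def confOf (d : ℕ) (C : ClusteringS d) : Conf d := Finset.univ.biUnion C.2

/-- `C ∈ 𝒞(U, a, b)`. -/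
def InC (d : ℕ) (U : Conf d) (a b : ℝ) (C : ClusteringS d) : Prop :=
  IsClusteringOf d C.2 U ∧ IsDOT d C.2 a b

/-- `U ∈ 𝒰_{d,n}(a, b)`. -/
def InU (d n : ℕ) (a b : ℝ) (U : Conf d) : Prop :=
  U.card = n ∧ ∃ C : ClusteringS d, InC d U a b C

/-- `C` is a clustering of an `n`-element configuration. -/
def IsClusteringConf (d n : ℕ) (C : ClusteringS d) : Prop :=
  (∀ i, (C.2 i).Nonempty) ∧ (∀ i j, i ≠ j → Disjoint (C.2 i) (C.2 j)) ∧
    (confOf d C).card = n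

open Classical in
/-- One step of the natural clustering. -/
noncomputable def clustStep (d : ℕ) (Ut Ut1 : Conf d) (C : ClusteringS d) : ClusteringS d :=
  if Ut1 = Ut then C
  else if h : ∃ p : Pt d × Pt d × Fin C.1,
      Ut \ Ut1 = {p.1} ∧ Ut1 \ Ut = {p.2.1} ∧ p.1 ∈ C.2 p.2.2 then
    ⟨C.1, Function.update C.2 h.choose.2.2
      (insert h.choose.2.1 ((C.2 h.choose.2.2).erase h.choose.1))⟩
  else ⟨1, fun _ => Ut1⟩

/-- The natural clustering of the trajectory `ω` with initial clustering `C0`. -/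
noncomputable def natClust (d : ℕ) (ω : ℕ → Conf d) (C0 : ClusteringS d) : ℕ → ClusteringS d
  | 0 => C0
  | t + 1 => clustStep d (ω t) (ω (t + 1)) (natClust d ω C0 t)

/-- `a_s = s^{1/2 − n^{−100}} + 100 n`. -/
noncomputable def aSep (n s : ℕ) : ℝ :=
  (s : ℝ) ^ ((1 : ℝ) / 2 - (n : ℝ) ^ (-(100 : ℝ))) + 100 * n

/-- `C^{i, x, y}`: remove `x` from cluster `i` of `C` and add `y` to that cluster. -/
def updC (d : ℕ) (C : ClusteringS d) (i : Fin C.1) (x y : Pt d) : ClusteringS d :=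
  ⟨C.1, Function.update C.2 i (insert y ((C.2 i).erase x))⟩

open Classical in
/-- The transition probabilities of the lifting of HAT to clusterings. -/
noncomputable def liftProb (d : ℕ) (E0 E1 : ClusteringS d) : ℝ :=
  ∑' x : Pt d, ∑' y : Pt d,
    if ∃ i : Fin E0.1, x ∈ E0.2 i ∧ E1 = updC d E0 i x y
    then pHAT d (confOf d E0) x y else 0

/-- The capacity of a clustering: the sum of the capacities of its clusters. -/
noncomputable def capS (d : ℕ) (C : ClusteringS d) : ℝ := ∑ i, capa d (↑(C.2 i))

/-- `H_C(i, x) = esc_{C^i}(x) / cap_C`. -/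
noncomputable def harmS (d : ℕ) (C : ClusteringS d) (i : Fin C.1) (x : Pt d) : ℝ :=
  esc d (↑(C.2 i)) x / capS d C

/-- `q_C(i, x, y)`. -/
noncomputable def qIHAT (d : ℕ) (C : ClusteringS d) (i : Fin C.1) (x y : Pt d) : ℝ :=
  harmS d C i x * transP d ((↑(C.2 i) : Set (Pt d)) \ {x}) x y

open Classical in
/-- The transition probabilities of intracluster HAT (IHAT). -/
noncomputable def ihatProb (d : ℕ) (D E : ClusteringS d) : ℝ :=
  ∑' x : Pt d, ∑' y : Pt d, ∑ i : Fin D.1,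
    if x ∈ D.2 i ∧ E = updC d D i x y then qIHAT d D i x y else 0

instance (d : ℕ) : MeasurableSpace (ClusteringS d) := ⊤

open Classical in
/-- `μ` is the law of the lifted HAT chain started from `E0`. -/
def IsLiftLaw (d : ℕ) (E0 : ClusteringS d) (μ : Measure (ℕ → ClusteringS d)) : Prop :=
  IsProbabilityMeasure μ ∧
  ∀ (t : ℕ) (u : ℕ → ClusteringS d),
    μ {ω | ∀ s ≤ t, ω s = u s} =
      (if u 0 = E0 then 1 else 0) *
        ∏ s ∈ Finset.range t, ENNReal.ofReal (liftProb d (u s) (u (s + 1)))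

open Classical in
/-- `μ` is the law of intracluster HAT started from `D0`. -/
def IsIHATLaw (d : ℕ) (D0 : ClusteringS d) (μ : Measure (ℕ → ClusteringS d)) : Prop :=
  IsProbabilityMeasure μ ∧
  ∀ (t : ℕ) (u : ℕ → ClusteringS d),
    μ {ω | ∀ s ≤ t, ω s = u s} =
      (if u 0 = D0 then 1 else 0) *
        ∏ s ∈ Finset.range t, ENNReal.ofReal (ihatProb d (u s) (u (s + 1)))

/-- `Pairs(E0, E1)`. -/
def Pairs (d : ℕ) (E0 E1 : ClusteringS d) : Set (Pt d × Pt d) :=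
  {p | 0 < pHAT d (confOf d E0) p.1 p.2 ∧
    ∃ i : Fin E0.1, p.1 ∈ E0.2 i ∧ E1 = updC d E0 i p.1 p.2}

/-- `Triples(E0, E1)`. -/
def Triples (d : ℕ) (E0 E1 : ClusteringS d) : Set (Fin E0.1 × Pt d × Pt d) :=
  {q | 0 < qIHAT d E0 q.1 q.2.1 q.2.2 ∧ E1 = updC d E0 q.1 q.2.1 q.2.2}

/-- The first standard basis vector of `ℤ^d`. -/
def e1v (d : ℕ) : Pt d := fun i => if (i : ℕ) = 0 then 1 else 0

/-- Reference dimers and trimers. -/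
def Ref (d : ℕ) : Set (Finset (Pt d)) :=
  {A | ∃ x : Pt d, A = {x, x + e1v d} ∨ A = {x, x + e1v d, x + e1v d + e1v d}}

/-- *-adjacency in `ℤ^d`: distinct points differing by at most one in each coordinate. -/
def starAdj (d : ℕ) (x y : Pt d) : Prop := x ≠ y ∧ ∀ i, (x i - y i).natAbs ≤ 1

/-- The *-visible boundary of `A`. -/
def visBdry (d : ℕ) (A : Finset (Pt d)) : Set (Pt d) :=
  {x | (∃ y ∈ A, starAdj d x y) ∧
    ∃ γ : ℕ → Pt d, γ 0 = x ∧ (∀ t, latAdj d (γ t) (γ (t + 1))) ∧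
      (∀ t, γ t ∉ A) ∧ ∀ r : ℝ, ∃ t, r < dist0 d (γ t) 0}

/-- `A` is connected in the nearest-neighbor graph of `ℤ^d`. -/
def LatConnected (d : ℕ) (A : Finset (Pt d)) : Prop :=
  ∀ x ∈ A, ∀ y ∈ A, ∃ (L : ℕ) (γ : ℕ → Pt d), γ 0 = x ∧ γ L = y ∧
    (∀ t < L, latAdj d (γ t) (γ (t + 1))) ∧ ∀ t ≤ L, γ t ∈ A

/-- Strict lexicographic order on `ℤ^d`. -/
def lexLt (d : ℕ) (x y : Pt d) : Prop :=
  ∃ i : Fin d, (∀ j, j < i → x j = y j) ∧ x i < y i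

/-- `x` is the lex (least) element of `A`. -/
def IsLex (d : ℕ) (A : Finset (Pt d)) (x : Pt d) : Prop :=
  x ∈ A ∧ ∀ y ∈ A, y ≠ x → lexLt d x y

section part1

/-- The finite set of unit steps. -/
def Dset (d : ℕ) : Finset (Pt d) :=
  Finset.univ.image (fun p : Fin d × Bool => Pi.single p.1 (if p.2 then (1:ℤ) else -1))

lemma mem_Dset {d : ℕ} {e : Pt d} : e ∈ Dset d ↔ e ∈ Dir d := by
  simp only [Dset, Dir, Finset.mem_image, Finset.mem_univ, true_and, Prod.exists, Set.mem_ofPred_eq]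
  constructor
  · rintro ⟨i, b, rfl⟩
    refine ⟨i, ?_⟩
    cases b <;> simp
  · rintro ⟨i, h | h⟩
    · exact ⟨i, true, by simp [h]⟩
    · exact ⟨i, false, by simp [h]⟩

lemma Dset_inj (d : ℕ) : Function.Injective
    (fun p : Fin d × Bool => (Pi.single p.1 (if p.2 then (1:ℤ) else -1) : Pt d)) := by
  rintro ⟨i, b⟩ ⟨j, c⟩ h
  have h1 := congrFun h i
  have hij : i = j := by
    by_contra hne
    simp [Pi.single_eq_of_ne hne] at h1
    cases b <;> simp at h1
  subst hij
  simp at h1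
  cases b <;> cases c <;> simp_all

lemma sum_Dset {d : ℕ} (f : Pt d → ℝ) :
    ∑ e ∈ Dset d, f e = ∑ i : Fin d, (f (Pi.single i 1) + f (Pi.single i (-1))) := by
  unfold Dset
  rw [Finset.sum_image (fun x _ y _ h => Dset_inj d h), Fintype.sum_prod_type]
  simp

/-- Average over the unit steps. -/
noncomputable def avg (d : ℕ) (f : Pt d → ℝ) : ℝ := (∑ e ∈ Dset d, f e) / ((2 * d : ℕ) : ℝ)

lemma card_Dset (d : ℕ) : (Dset d).card = 2 * d := by
  unfold Dset
  rw [Finset.card_image_of_injective _ (Dset_inj d)]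
  simp [mul_comm]

lemma avg_const {d : ℕ} (hd : 0 < d) (r : ℝ) : avg d (fun _ => r) = r := by
  have : (d:ℝ) ≠ 0 := by positivity
  simp only [avg, Finset.sum_const, card_Dset, nsmul_eq_mul]
  push_cast
  field_simp

lemma avg_mono {d : ℕ} {f g : Pt d → ℝ} (h : ∀ e ∈ Dset d, f e ≤ g e) : avg d f ≤ avg d g := by
  unfold avg
  gcongr with e he
  exact h e he

lemma avg_congr {d : ℕ} {f g : Pt d → ℝ} (h : ∀ e ∈ Dset d, f e = g e) : avg d f = avg d g := by
  unfold avg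
  rw [Finset.sum_congr rfl h]

lemma avg_nonneg {d : ℕ} {f : Pt d → ℝ} (h : ∀ e ∈ Dset d, 0 ≤ f e) : 0 ≤ avg d f := by
  unfold avg
  exact div_nonneg (Finset.sum_nonneg h) (by positivity)

lemma avg_add {d : ℕ} (f g : Pt d → ℝ) : avg d (fun e => f e + g e) = avg d f + avg d g := by
  unfold avg
  rw [Finset.sum_add_distrib, add_div]

lemma avg_sum {d : ℕ} {ι : Type*} (s : Finset ι) (f : ι → Pt d → ℝ) :
    avg d (fun e => ∑ i ∈ s, f i e) = ∑ i ∈ s, avg d (f i) := by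
  unfold avg
  rw [Finset.sum_comm, Finset.sum_div]

lemma avg_ge_single {d : ℕ} {f : Pt d → ℝ} (h : ∀ e ∈ Dset d, 0 ≤ f e) {e : Pt d}
    (he : e ∈ Dset d) : f e / ((2 * d : ℕ) : ℝ) ≤ avg d f := by
  unfold avg
  gcongr
  exact Finset.single_le_sum h he

lemma finite_steps (d T : ℕ) (P : (Fin T → Pt d) → Prop) :
    Finite {s : Fin T → Pt d // (∀ i, s i ∈ Dir d) ∧ P s} := by
  have hf : (Dir d).Finite := by
    refine (Dset d).finite_toSet.subset ?_
    intro e he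
    exact mem_Dset.2 he
  have h2 : (Set.univ.pi (fun _ : Fin T => Dir d)).Finite := Set.Finite.pi' (fun _ => hf) |>.subset (by
    intro s hs i; exact hs i (Set.mem_univ _))
  refine Set.Finite.to_subtype (s := {s : Fin T → Pt d | (∀ i, s i ∈ Dir d) ∧ P s}) (h2.subset ?_)
  intro s hs i _
  exact hs.1 i

lemma prob_nonneg {d T : ℕ} (P : (Fin T → Pt d) → Prop) : 0 ≤ prob d T P := by
  unfold prob; positivity

lemma prob_succ {d T : ℕ} (P : (Fin (T+1) → Pt d) → Prop) :
    prob d (T+1) P = avg d (fun e => prob d T (fun s => P (Fin.cons (α := fun _ => Pt d) e s))) := by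
  have hN : Nat.card {s : Fin (T+1) → Pt d // (∀ i, s i ∈ Dir d) ∧ P s}
      = ∑ e ∈ Dset d, Nat.card {s : Fin T → Pt d // (∀ i, s i ∈ Dir d) ∧
          P (Fin.cons (α := fun _ => Pt d) e s)} := by
    rw [← Finset.sum_coe_sort (Dset d) (fun e => Nat.card {s : Fin T → Pt d // (∀ i, s i ∈ Dir d) ∧
          P (Fin.cons (α := fun _ => Pt d) e s)})]
    have := fun e : Dset d => finite_steps d T (fun s => P (Fin.cons (α := fun _ => Pt d) (e : Pt d) s))
    rw [← Nat.card_sigma]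
    refine Nat.card_congr ⟨fun s => ⟨⟨s.1 0, mem_Dset.2 (s.2.1 0)⟩, ⟨Fin.tail s.1, fun i => s.2.1 _, ?_⟩⟩,
      fun p => ⟨Fin.cons (α := fun _ => Pt d) p.1.1 p.2.1, ?_, p.2.2.2⟩, ?_, ?_⟩
    · have := s.2.2
      rwa [← Fin.cons_self_tail s.1] at this
    · intro i
      refine Fin.cases ?_ (fun j => ?_) i
      · simpa using mem_Dset.1 p.1.2
      · simpa using p.2.2.1 j
    · intro s
      apply Subtype.ext
      exact Fin.cons_self_tail s.1
    · rintro ⟨e, s⟩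
      rfl
  unfold prob avg
  rw [hN, ← Finset.sum_div, pow_succ, div_div]
  push_cast
  rfl

lemma prob_zero {d : ℕ} (P : (Fin 0 → Pt d) → Prop) (h : ∀ s, P s) : prob d 0 P = 1 := by
  unfold prob
  have : Nat.card {s : Fin 0 → Pt d // (∀ i, s i ∈ Dir d) ∧ P s} = 1 := by
    rw [Nat.card_eq_one_iff_unique]
    exact ⟨⟨fun a b => Subtype.ext (Subsingleton.elim _ _)⟩, ⟨⟨fun i => i.elim0, fun i => i.elim0, h _⟩⟩⟩
  rw [this]; simp

lemma prob_false {d T : ℕ} (P : (Fin T → Pt d) → Prop) (h : ∀ s, ¬ P s) : prob d T P = 0 := by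
  unfold prob
  have : IsEmpty {s : Fin T → Pt d // (∀ i, s i ∈ Dir d) ∧ P s} := ⟨fun s => h _ s.2.2⟩
  simp

lemma prob_congr {d T : ℕ} {P Q : (Fin T → Pt d) → Prop} (h : ∀ s, P s ↔ Q s) :
    prob d T P = prob d T Q := by
  have : P = Q := funext fun s => propext (h s)
  rw [this]

lemma wpos_zero {d T : ℕ} (x : Pt d) (s : Fin T → Pt d) : wpos d x s 0 = x := by
  simp [wpos]

lemma wpos_cons {d T : ℕ} (x e : Pt d) (s : Fin T → Pt d) (t : ℕ) :
    wpos d x (Fin.cons (α := fun _ => Pt d) e s) (t+1) = wpos d (x + e) s t := by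
  unfold wpos
  rw [Finset.sum_filter, Fin.sum_univ_succ, Finset.sum_filter]
  simp [add_assoc]

/-- no hit of `A` at times `1..T`. -/
noncomputable def Gn (d : ℕ) (A : Set (Pt d)) (T : ℕ) (x : Pt d) : ℝ :=
  prob d T (fun s => ∀ t, 1 ≤ t → t ≤ T → wpos d x s t ∉ A)

/-- first hit at time `t`. -/
noncomputable def Fh (d : ℕ) (W : Set (Pt d)) (t : ℕ) (x : Pt d) : ℝ :=
  prob d t (fun s => 1 ≤ t ∧ wpos d x s t ∈ W ∧
    ∀ u, 1 ≤ u → u < t → wpos d x s u ∉ W)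

/-- first hit at time `t`, from `y`. -/
noncomputable def Fy (d : ℕ) (W : Set (Pt d)) (y : Pt d) (t : ℕ) (x : Pt d) : ℝ :=
  prob d t (fun s => 1 ≤ t ∧ wpos d x s t ∈ W ∧ wpos d x s (t - 1) = y ∧
    ∀ u, 1 ≤ u → u < t → wpos d x s u ∉ W)

open Classical

lemma Gn_zero {d : ℕ} (A : Set (Pt d)) (x : Pt d) : Gn d A 0 x = 1 :=
  prob_zero _ (fun s t h1 h2 => by omega)

lemma Gn_succ {d : ℕ} (A : Set (Pt d)) (T : ℕ) (x : Pt d) :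
    Gn d A (T+1) x = avg d (fun e => if x + e ∈ A then 0 else Gn d A T (x + e)) := by
  unfold Gn
  rw [prob_succ]
  refine avg_congr fun e _ => ?_
  split_ifs with h
  · refine prob_false _ fun s hs => hs 1 le_rfl (by omega) ?_
    have := wpos_cons x e s 0
    rw [zero_add] at this
    rw [this, wpos_zero]; exact h
  · refine prob_congr fun s => ⟨fun hs t h1 h2 => ?_, fun hs t h1 h2 => ?_⟩
    · have := hs (t+1) (by omega) (by omega)
      rwa [wpos_cons] at this
    · obtain ⟨t, rfl⟩ : ∃ t', t = t' + 1 := ⟨t - 1, by omega⟩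
      rw [wpos_cons]
      rcases Nat.eq_zero_or_pos t with rfl | ht
      · rwa [wpos_zero]
      · exact hs t ht (by omega)

lemma Fh_zero {d : ℕ} (W : Set (Pt d)) (x : Pt d) : Fh d W 0 x = 0 :=
  prob_false _ (fun s h => by omega)

lemma Fy_zero {d : ℕ} (W : Set (Pt d)) (y x : Pt d) : Fy d W y 0 x = 0 :=
  prob_false _ (fun s h => by omega)

lemma Fh_one {d : ℕ} (W : Set (Pt d)) (x : Pt d) :
    Fh d W 1 x = avg d (fun e => if x + e ∈ W then 1 else 0) := by
  unfold Fh
  rw [show (1:ℕ) = 0 + 1 from rfl, prob_succ]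
  refine avg_congr fun e _ => ?_
  split_ifs with h
  · refine prob_zero _ fun s => ⟨le_rfl, ?_, fun u h1 h2 => by omega⟩
    rw [wpos_cons, wpos_zero]; exact h
  · refine prob_false _ fun s hs => h ?_
    have := hs.2.1
    rwa [wpos_cons, wpos_zero] at this

lemma Fy_one {d : ℕ} (W : Set (Pt d)) (y x : Pt d) :
    Fy d W y 1 x = if x = y then Fh d W 1 x else 0 := by
  unfold Fy Fh
  split_ifs with h
  · refine prob_congr fun s => ?_
    rw [Nat.sub_self, wpos_zero]
    tauto
  · refine prob_false _ fun s hs => h ?_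
    have := hs.2.2.1
    rwa [Nat.sub_self, wpos_zero] at this

lemma Fh_succ {d : ℕ} (W : Set (Pt d)) (T : ℕ) (x : Pt d) :
    Fh d W (T+2) x = avg d (fun e => if x + e ∈ W then 0 else Fh d W (T+1) (x + e)) := by
  unfold Fh
  rw [prob_succ]
  refine avg_congr fun e _ => ?_
  split_ifs with h
  · refine prob_false _ fun s hs => hs.2.2 1 le_rfl (by omega) ?_
    have := wpos_cons x e s 0
    rw [zero_add] at this
    rw [this, wpos_zero]; exact h
  · refine prob_congr fun s => ⟨fun hs => ⟨by omega, ?_, fun t h1 h2 => ?_⟩,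
      fun hs => ⟨by omega, ?_, fun t h1 h2 => ?_⟩⟩
    · have := hs.2.1
      rwa [wpos_cons] at this
    · have := hs.2.2 (t+1) (by omega) (by omega)
      rwa [wpos_cons] at this
    · rw [wpos_cons]; exact hs.2.1
    · obtain ⟨t, rfl⟩ : ∃ t', t = t' + 1 := ⟨t - 1, by omega⟩
      rw [wpos_cons]
      rcases Nat.eq_zero_or_pos t with rfl | ht
      · rwa [wpos_zero]
      · exact hs.2.2 t ht (by omega)

lemma Fy_succ {d : ℕ} (W : Set (Pt d)) (y : Pt d) (T : ℕ) (x : Pt d) :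
    Fy d W y (T+2) x = avg d (fun e => if x + e ∈ W then 0 else Fy d W y (T+1) (x + e)) := by
  unfold Fy
  rw [prob_succ]
  refine avg_congr fun e _ => ?_
  split_ifs with h
  · refine prob_false _ fun s hs => hs.2.2.2 1 le_rfl (by omega) ?_
    have := wpos_cons x e s 0
    rw [zero_add] at this
    rw [this, wpos_zero]; exact h
  · refine prob_congr fun s => ⟨fun hs => ⟨by omega, ?_, ?_, fun t h1 h2 => ?_⟩,
      fun hs => ⟨by omega, ?_, ?_, fun t h1 h2 => ?_⟩⟩
    · have := hs.2.1
      rwa [wpos_cons] at this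
    · have := hs.2.2.1
      rw [show T + 2 - 1 = T + 1 by omega, wpos_cons] at this
      exact this
    · have := hs.2.2.2 (t+1) (by omega) (by omega)
      rwa [wpos_cons] at this
    · rw [wpos_cons]; exact hs.2.1
    · rw [show T + 2 - 1 = T + 1 by omega, wpos_cons]
      exact hs.2.2.1
    · obtain ⟨t, rfl⟩ : ∃ t', t = t' + 1 := ⟨t - 1, by omega⟩
      rw [wpos_cons]
      rcases Nat.eq_zero_or_pos t with rfl | ht
      · rwa [wpos_zero]
      · exact hs.2.2.2 t ht (by omega)

lemma Gn_nonneg {d : ℕ} (A : Set (Pt d)) (T : ℕ) (x : Pt d) : 0 ≤ Gn d A T x := prob_nonneg _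
lemma Fh_nonneg {d : ℕ} (A : Set (Pt d)) (T : ℕ) (x : Pt d) : 0 ≤ Fh d A T x := prob_nonneg _
lemma Fy_nonneg {d : ℕ} (A : Set (Pt d)) (y : Pt d) (T : ℕ) (x : Pt d) : 0 ≤ Fy d A y T x :=
  prob_nonneg _

lemma Gn_eq {d : ℕ} (hd : 0 < d) (A : Set (Pt d)) (T : ℕ) : ∀ x : Pt d,
    Gn d A T x = Gn d A (T+1) x + Fh d A (T+1) x := by
  induction T with
  | zero =>
    intro x
    rw [Gn_zero, Gn_succ, zero_add, Fh_one, ← avg_add]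
    rw [← avg_const hd 1]
    refine avg_congr fun e _ => ?_
    split_ifs <;> simp [Gn_zero, avg_const hd]
  | succ T ih =>
    intro x
    rw [Gn_succ, Gn_succ A (T+1), Fh_succ, ← avg_add]
    refine avg_congr fun e _ => ?_
    split_ifs
    · simp
    · exact ih _

lemma Gn_anti {d : ℕ} (hd : 0 < d) (A : Set (Pt d)) (x : Pt d) :
    Antitone (fun T => Gn d A T x) := by
  refine antitone_nat_of_succ_le fun T => ?_
  have := Gn_eq hd A T x
  have := Fh_nonneg A (T+1) x
  linarith

lemma sum_Fh {d : ℕ} (hd : 0 < d) (A : Set (Pt d)) (x : Pt d) (T : ℕ) :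
    ∑ t ∈ Finset.range (T+1), Fh d A t x = 1 - Gn d A T x := by
  induction T with
  | zero => simp [Fh_zero, Gn_zero]
  | succ T ih =>
    rw [Finset.sum_range_succ, ih, Gn_eq hd A T x]; ring

lemma sum_Fh_le {d : ℕ} (hd : 0 < d) (A : Set (Pt d)) (x : Pt d) (T : ℕ) :
    ∑ t ∈ Finset.range T, Fh d A t x ≤ 1 := by
  cases T with
  | zero => simp
  | succ T => rw [sum_Fh hd]; linarith [Gn_nonneg A T x]

lemma summable_Fh {d : ℕ} (hd : 0 < d) (A : Set (Pt d)) (x : Pt d) :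
    Summable (fun t => Fh d A t x) :=
  summable_of_sum_range_le (fun t => Fh_nonneg A t x) (sum_Fh_le hd A x)

lemma retProb_le_one {d : ℕ} (hd : 0 < d) (A : Set (Pt d)) (x : Pt d) : retProb d A x ≤ 1 :=
  Real.tsum_le_of_sum_range_le (fun t => Fh_nonneg A t x) (sum_Fh_le hd A x)

lemma Fy_le_Fh {d : ℕ} (W : Set (Pt d)) (y : Pt d) (t : ℕ) : ∀ (x : Pt d),
    Fy d W y t x ≤ Fh d W t x := by
  induction t using Nat.twoStepInduction with
  | zero => intro x; rw [Fy_zero, Fh_zero]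
  | one => intro x; rw [Fy_one]; split_ifs; exacts [le_rfl, Fh_nonneg _ _ _]
  | more T _ ih =>
    intro x
    rw [Fy_succ, Fh_succ]
    refine avg_mono fun e _ => ?_
    split_ifs
    exacts [le_rfl, ih _]

lemma summable_Fy {d : ℕ} (hd : 0 < d) (A : Set (Pt d)) (y x : Pt d) :
    Summable (fun t => Fy d A y t x) :=
  Summable.of_nonneg_of_le (fun t => Fy_nonneg A y t x) (fun t => Fy_le_Fh A y t x)
    (summable_Fh hd A x)

lemma hitFrom_nonneg {d : ℕ} (W : Set (Pt d)) (x y : Pt d) : 0 ≤ hitFrom d W x y :=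
  tsum_nonneg fun t => Fy_nonneg W y t x

lemma retProb_nonneg {d : ℕ} (W : Set (Pt d)) (x : Pt d) : 0 ≤ retProb d W x :=
  tsum_nonneg fun t => Fh_nonneg W t x

lemma hitFrom_le_retProb {d : ℕ} (hd : 0 < d) (W : Set (Pt d)) (x y : Pt d) :
    hitFrom d W x y ≤ retProb d W x :=
  (summable_Fy hd W y x).tsum_le_tsum (fun t => Fy_le_Fh W y t x) (summable_Fh hd W x)

/-- hitting candidates: neighbours of `W` outside of `W`. -/
noncomputable def nbrs (d : ℕ) (W : Finset (Pt d)) : Finset (Pt d) :=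
  (W.biUnion fun w => (Dset d).image (fun e => w - e)) \ W

lemma mem_nbrs {d : ℕ} {W : Finset (Pt d)} {y : Pt d} :
    y ∈ nbrs d W ↔ y ∉ W ∧ ∃ e ∈ Dset d, y + e ∈ W := by
  unfold nbrs
  simp only [Finset.mem_sdiff, Finset.mem_biUnion, Finset.mem_image]
  constructor
  · rintro ⟨⟨w, hw, e, he, rfl⟩, h⟩
    exact ⟨h, e, he, by simpa using hw⟩
  · rintro ⟨h, e, he, hw⟩
    exact ⟨⟨y + e, hw, e, he, by simp⟩, h⟩

lemma card_nbrs {d : ℕ} (W : Finset (Pt d)) : (nbrs d W).card ≤ W.card * (2 * d) := by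
  unfold nbrs
  refine (Finset.card_le_card Finset.sdiff_subset).trans ?_
  refine Finset.card_biUnion_le_card_mul _ _ _ fun w _ => ?_
  rw [← card_Dset d]
  exact Finset.card_image_le

lemma Fh_le_sum {d : ℕ} (W : Finset (Pt d)) (t : ℕ) : ∀ (x : Pt d), x ∉ W →
    Fh d W t x ≤ ∑ y ∈ nbrs d W, Fy d W y t x := by
  induction t using Nat.twoStepInduction with
  | zero => intro x _; simp [Fy_zero, Fh_zero]
  | one =>
    intro x hx
    simp only [Fy_one]
    rw [Finset.sum_ite_eq]
    split_ifs with h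
    · exact le_rfl
    · rw [mem_nbrs] at h
      push Not at h
      rw [Fh_one]
      refine le_of_eq ?_
      unfold avg
      rw [Finset.sum_eq_zero, zero_div]
      intro e he
      rw [if_neg]
      exact h hx e he
  | more T _ ih =>
    intro x hx
    simp only [Fy_succ, Fh_succ]
    rw [← avg_sum]
    refine avg_mono fun e _ => ?_
    split_ifs with h
    · simp
    · exact ih _ h

lemma retProb_le_sum {d : ℕ} (hd : 0 < d) (W : Finset (Pt d)) (x : Pt d) (hx : x ∉ W) :
    retProb d W x ≤ ∑ y ∈ nbrs d W, hitFrom d W x y := by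
  have : ∑ y ∈ nbrs d W, hitFrom d W x y = ∑' t, ∑ y ∈ nbrs d W, Fy d W y t x :=
    (Summable.tsum_finsetSum (fun y _ => summable_Fy hd _ y x)).symm
  rw [this]
  exact (summable_Fh hd _ x).tsum_le_tsum (fun t => Fh_le_sum W t x hx)
    (summable_sum fun y _ => summable_Fy hd _ y x)

/-! ### paths -/

/-- A nearest-neighbour path of `k` steps, avoiding `A` at all times `≥ 1`. -/
def Pth {d : ℕ} (A : Set (Pt d)) : ℕ → Pt d → Pt d → Prop
  | 0, x, z => x = z
  | k + 1, x, z => ∃ e ∈ Dset d, x + e ∉ A ∧ Pth A k (x + e) z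

lemma Pth.trans {d : ℕ} {A : Set (Pt d)} {k l : ℕ} : ∀ {x y z : Pt d}, Pth A k x y → Pth A l y z →
    Pth A (k + l) x z := by
  induction k with
  | zero => rintro x y z rfl h; simpa using h
  | succ k ih =>
    rintro x y z ⟨e, he, h1, h2⟩ h
    rw [show k + 1 + l = (k + l) + 1 by omega]
    exact ⟨e, he, h1, ih h2 h⟩

lemma Pth.mono {d : ℕ} {A B : Set (Pt d)} (hAB : B ⊆ A) {k : ℕ} : ∀ {x y : Pt d}, Pth A k x y →
    Pth B k x y := by
  induction k with
  | zero => intro x y h; exact h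
  | succ k ih =>
    rintro x y ⟨e, he, h1, h2⟩
    exact ⟨e, he, fun h => h1 (hAB h), ih h2⟩

lemma Gn_path {d : ℕ} {A : Set (Pt d)} {k : ℕ} (T : ℕ) : ∀ {x z : Pt d}, Pth A k x z →
    Gn d A T z / ((2 * d : ℕ) : ℝ) ^ k ≤ Gn d A (T + k) x := by
  induction k with
  | zero => rintro x z rfl; simp
  | succ k ih =>
    rintro x z ⟨e, he, h1, h2⟩
    rw [← add_assoc, Gn_succ]
    refine le_trans ?_ (avg_ge_single (e := e) ?_ he)
    · simp only [if_neg h1]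
      rw [pow_succ, ← div_div]
      gcongr
      exact ih h2
    · intro e' _
      split_ifs
      exacts [le_rfl, Gn_nonneg _ _ _]

lemma Fy_path {d : ℕ} {W : Set (Pt d)} {y : Pt d} {e' : Pt d} (he' : e' ∈ Dset d) (hy : y + e' ∈ W)
    {k : ℕ} : ∀ {x : Pt d}, Pth W k x y →
    1 / ((2 * d : ℕ) : ℝ) ^ (k+1) ≤ Fy d W y (k + 1) x := by
  induction k with
  | zero =>
    rintro x rfl
    rw [zero_add, Fy_one, if_pos rfl, Fh_one, pow_one]
    refine le_trans ?_ (avg_ge_single (e := e') ?_ he')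
    · simp only [if_pos hy]; exact le_rfl
    · intro e _
      split_ifs <;> norm_num
  | succ k ih =>
    rintro x ⟨e, he, h1, h2⟩
    rw [Fy_succ]
    refine le_trans ?_ (avg_ge_single (e := e) ?_ he)
    · simp only [if_neg h1]
      rw [pow_succ, ← div_div]
      gcongr
      exact ih h2
    · intro e' _
      split_ifs
      exacts [le_rfl, Fy_nonneg _ _ _ _]

lemma hitFrom_path {d : ℕ} (hd : 0 < d) {W : Set (Pt d)} {x y : Pt d} {e' : Pt d}
    (he' : e' ∈ Dset d) (hy : y + e' ∈ W) {k : ℕ} (h : Pth W k x y) :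
    1 / ((2 * d : ℕ) : ℝ) ^ (k+1) ≤ hitFrom d W x y :=
  (Fy_path he' hy h).trans
    ((summable_Fy hd W y x).le_tsum (k+1) (fun t _ => Fy_nonneg W y t x))


end part1

section part2
open Classical

/-- squared euclidean norm -/
noncomputable def sq2 {d : ℕ} (x : Pt d) : ℝ := ∑ i, (x i : ℝ) ^ 2

lemma sq2_nonneg {d : ℕ} (x : Pt d) : 0 ≤ sq2 x := Finset.sum_nonneg fun i _ => sq_nonneg _

lemma sq2_ge {d : ℕ} (x : Pt d) (i : Fin d) : (x i : ℝ)^2 ≤ sq2 x :=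
  Finset.single_le_sum (f := fun i => (x i : ℝ)^2) (fun i _ => sq_nonneg _) (Finset.mem_univ i)

lemma sq2_add_single {d : ℕ} (x : Pt d) (i : Fin d) (c : ℤ) :
    sq2 (x + Pi.single i c) = sq2 x + 2 * c * x i + c ^ 2 := by
  unfold sq2
  rw [← Finset.add_sum_erase _ _ (Finset.mem_univ i),
    ← Finset.add_sum_erase Finset.univ (fun i => (x i : ℝ)^2) (Finset.mem_univ i)]
  have : ∑ j ∈ Finset.univ.erase i, (((x + Pi.single i c : Pt d) j : ℤ) : ℝ) ^ 2
      = ∑ j ∈ Finset.univ.erase i, (x j : ℝ)^2 := by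
    refine Finset.sum_congr rfl fun j hj => ?_
    have : j ≠ i := Finset.ne_of_mem_erase hj
    simp [this]
  rw [this]
  simp
  ring

lemma pair_bound {R x : ℝ} (hR : x ^ 2 + 4 ≤ R) :
    1 / (R + 2 * x + 1) + 1 / (R - 2 * x + 1) ≤ 2 / (R + 1) + 10 * x ^ 2 / (R + 1) ^ 3 := by
  have h1 : 0 < R + 2 * x + 1 := by nlinarith [sq_nonneg (x + 1)]
  have h2 : 0 < R - 2 * x + 1 := by nlinarith [sq_nonneg (x - 1)]
  have h3 : 0 < R + 1 := by nlinarith [sq_nonneg x]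
  have e1 : 1 / (R + 2 * x + 1) + 1 / (R - 2 * x + 1) = 2 * (R + 1) / ((R+1)^2 - 4 * x^2) := by
    have : (R+1)^2 - 4 * x^2 = (R + 2 * x + 1) * (R - 2 * x + 1) := by ring
    rw [this]; field_simp; ring
  have e2 : 2 / (R + 1) + 10 * x ^ 2 / (R + 1) ^ 3 = (2 * (R+1)^2 + 10 * x^2) / (R+1)^3 := by
    field_simp
  have h4 : 0 < (R+1)^2 - 4 * x^2 := by
    have : (R+1)^2 - 4 * x^2 = (R + 2 * x + 1) * (R - 2 * x + 1) := by ring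
    rw [this]; positivity
  rw [e1, e2, div_le_div_iff₀ h4 (by positivity)]
  -- need (R+1)^2 ≥ 20 x^2
  have h5 : 20 * x^2 ≤ (R+1)^2 := by
    nlinarith [sq_nonneg (x^2 - 5), sq_nonneg x]
  nlinarith [mul_nonneg (sq_nonneg x) (sub_nonneg.2 h5)]

lemma superharm {d : ℕ} (hd : 5 ≤ d) (x : Pt d) :
    avg d (fun e => 1 / (sq2 (x + e) + 4)) ≤ 1 / (sq2 x + 4) := by
  have hd0 : (0:ℝ) < d := by exact_mod_cast (by omega : 0 < d)
  have hd5 : (5:ℝ) ≤ d := by exact_mod_cast hd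
  unfold avg
  rw [sum_Dset]
  set R := sq2 x + 4 with hR
  have hs := sq2_nonneg x
  have hR4 : 4 ≤ R := by linarith
  have hb : ∀ i : Fin d, 1 / (sq2 (x + Pi.single i 1) + 4) + 1 / (sq2 (x + Pi.single i (-1)) + 4)
      ≤ 2 / (R + 1) + 10 * (x i : ℝ) ^ 2 / (R + 1) ^ 3 := by
    intro i
    have := pair_bound (R := R) (x := x i) (by linarith [sq2_ge x i])
    rw [sq2_add_single, sq2_add_single]
    refine le_trans (le_of_eq ?_) this
    push_cast
    congr 2 <;> (rw [hR]; ring)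
  have hsum := Finset.sum_le_sum (s := Finset.univ) fun i _ => hb i
  refine (div_le_div_of_nonneg_right hsum (by positivity)).trans ?_
  rw [Finset.sum_add_distrib, ← Finset.sum_div Finset.univ (fun i => 10 * (x i : ℝ) ^ 2),
    ← Finset.mul_sum]
  have : ∑ i, (x i : ℝ)^2 = R - 4 := by rw [hR]; unfold sq2; ring
  rw [this]
  simp only [Finset.sum_const, Finset.card_univ, Fintype.card_fin, nsmul_eq_mul]
  push_cast
  rw [add_div]
  have h1 : (d:ℝ) * (2 / (R+1)) / (2 * d) = 1 / (R+1) := by field_simp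
  rw [h1]
  have h2 : 10 * (R - 4) / (R+1)^3 / (2 * d) ≤ (R - 4) / (R+1)^3 := by
    rw [div_div, div_le_div_iff₀ (by positivity) (by positivity)]
    have : 0 ≤ (R - 4) * (R+1)^3 := mul_nonneg (by linarith) (by positivity)
    nlinarith
  have h3 : 1 / (R+1) + (R - 4) / (R+1)^3 ≤ 1 / R := by
    have : 1 / (R+1) + (R - 4) / (R+1)^3 = ((R+1)^2 + (R-4)) / (R+1)^3 := by
      field_simp
    rw [this, div_le_div_iff₀ (by positivity) (by positivity)]
    nlinarith
  linarith

lemma hit_bound {d : ℕ} (hd : 5 ≤ d) (A : Finset (Pt d)) (T : ℕ) : ∀ x : Pt d,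
    1 - Gn d A T x ≤ ∑ w ∈ A, 4 * (1 / (sq2 (x - w) + 4)) := by
  induction T with
  | zero =>
    intro x
    rw [Gn_zero, sub_self]
    exact Finset.sum_nonneg fun w _ => by have := sq2_nonneg (x - w); positivity
  | succ T ih =>
    intro x
    have hd0 : 0 < d := by omega
    have h1 : 1 - Gn d A (T+1) x
        ≤ avg d (fun e => ∑ w ∈ A, 4 * (1 / (sq2 (x + e - w) + 4))) := by
      rw [sub_le_iff_le_add, Gn_succ, ← avg_add]
      conv_lhs => rw [← avg_const hd0 1]
      refine avg_mono fun e _ => ?_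
      split_ifs with h
      · rw [add_zero]
        have h2 := Finset.single_le_sum (s := A) (f := fun w => 4 * (1 / (sq2 (x + e - w) + 4)))
          (fun w _ => by have := sq2_nonneg (x + e - w); positivity) h
        refine le_trans ?_ h2
        simp [sq2]
      · linarith [ih (x + e)]
    refine h1.trans ?_
    rw [avg_sum]
    refine Finset.sum_le_sum fun w _ => ?_
    have := superharm hd (x - w)
    unfold avg at this ⊢
    rw [← Finset.mul_sum, mul_div_assoc]
    refine mul_le_mul_of_nonneg_left ?_ (by norm_num)
    simpa [sub_add_eq_add_sub] using this

lemma esc_path {d : ℕ} (hd : 5 ≤ d) (U : Finset (Pt d)) {x z : Pt d} (hx : x ∈ U) {k : ℕ}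
    (hp : Pth (↑U : Set (Pt d)) k x z) (hz : ∀ u ∈ U, 8 * (U.card : ℝ) ≤ sq2 (z - u)) :
    (1/2) / ((2 * d : ℕ) : ℝ) ^ k ≤ esc d U x := by
  have hd0 : 0 < d := by omega
  unfold esc
  rw [if_pos (by exact_mod_cast hx)]
  refine le_ciInf fun T => ?_
  have h1 : (1:ℝ)/2 ≤ Gn d U T z := by
    have := hit_bound hd U T z
    have hcard : (0:ℝ) < U.card := by exact_mod_cast Finset.card_pos.2 ⟨x, hx⟩
    have h2 : ∑ w ∈ U, 4 * (1 / (sq2 (z - w) + 4)) ≤ ∑ w ∈ U, 1 / (2 * (U.card : ℝ)) := by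
      refine Finset.sum_le_sum fun w hw => ?_
      have h3 := hz w hw
      rw [mul_one_div, div_le_div_iff₀ (by linarith) (by positivity)]
      linarith
    rw [Finset.sum_const, nsmul_eq_mul] at h2
    have h4 : (U.card : ℝ) * (1 / (2 * (U.card : ℝ))) = 1/2 := by field_simp
    linarith
  have h2 := Gn_path T hp
  have h3 := Gn_anti hd0 (↑U) x (Nat.le_add_right T k)
  refine le_trans ?_ (h2.trans h3)
  gcongr

lemma esc_nonneg {d : ℕ} (A : Set (Pt d)) (x : Pt d) : 0 ≤ esc d A x := by
  unfold esc
  split_ifs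
  · exact Real.iInf_nonneg fun T => prob_nonneg _
  · exact le_rfl

lemma esc_le_one {d : ℕ} (A : Set (Pt d)) (x : Pt d) : esc d A x ≤ 1 := by
  unfold esc
  split_ifs
  · refine (ciInf_le ⟨0, ?_⟩ 0).trans (le_of_eq (Gn_zero A x))
    rintro _ ⟨T, rfl⟩
    exact prob_nonneg _
  · norm_num

lemma capa_eq {d : ℕ} (U : Finset (Pt d)) : capa d U = ∑ x ∈ U, esc d U x := by
  unfold capa
  exact Finset.tsum_subtype' U (fun x => esc d U x)

lemma harm_ge {d : ℕ} (U : Finset (Pt d)) {x : Pt d} (hx : x ∈ U) :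
    esc d U x / U.card ≤ harm d U x := by
  unfold harm
  rcases (esc_nonneg (↑U) x).eq_or_lt with h | h
  · rw [← h]; simp
  have h1 : capa d U ≤ U.card := by
    rw [capa_eq]
    refine (Finset.sum_le_sum fun x _ => esc_le_one (↑U) x).trans (by simp)
  have h2 : 0 < capa d U := by
    rw [capa_eq]
    exact Finset.sum_pos' (fun x _ => esc_nonneg (↑U) x) ⟨x, hx, h⟩
  gcongr

lemma harm_nonneg {d : ℕ} (U : Finset (Pt d)) (x : Pt d) : 0 ≤ harm d U x := by
  unfold harm
  refine div_nonneg (esc_nonneg _ _) ?_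
  rw [capa_eq]
  exact Finset.sum_nonneg fun x _ => esc_nonneg (↑U) x

lemma transP_nonneg {d : ℕ} (W : Set (Pt d)) (x y : Pt d) : 0 ≤ transP d W x y :=
  div_nonneg (hitFrom_nonneg _ _ _) (retProb_nonneg _ _)

lemma transP_ge {d : ℕ} (hd : 0 < d) (W : Set (Pt d)) (x y : Pt d) :
    hitFrom d W x y ≤ transP d W x y := by
  unfold transP
  rcases (hitFrom_nonneg W x y).eq_or_lt with h | h
  · rw [← h]; simp
  have h1 := hitFrom_le_retProb hd W x y
  have h2 := retProb_le_one hd W x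
  rw [le_div_iff₀ (by linarith)]
  nlinarith

lemma pHAT_nonneg {d : ℕ} (U : Conf d) (x y : Pt d) : 0 ≤ pHAT d U x y :=
  mul_nonneg (harm_nonneg _ _) (transP_nonneg _ _ _)

lemma pHAT_not_mem {d : ℕ} (U : Conf d) {x : Pt d} (hx : x ∉ U) (y : Pt d) : pHAT d U x y = 0 := by
  unfold pHAT harm esc
  rw [if_neg (by exact_mod_cast hx)]
  simp

lemma hatProb_ge {d : ℕ} (U : Conf d) {x y : Pt d} (hx : x ∈ U) (hy : y ∉ U.erase x) :
    pHAT d U x y ≤ hatProb d U (insert y (U.erase x)) := by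
  unfold hatProb
  split_ifs with h
  · have hyU : y ∈ U := by rw [← h]; simp
    have hxy : y = x := by
      by_contra hne
      exact hy (Finset.mem_erase.2 ⟨hne, hyU⟩)
    subst hxy
    have hs : Summable (fun z => pHAT d U z z) := by
      refine summable_of_ne_finset_zero (s := U) fun z hz => pHAT_not_mem U hz z
    exact hs.le_tsum y (fun z _ => pHAT_nonneg U z z)
  · have hne : x ≠ y := by
      rintro rfl
      exact h (Finset.insert_erase hx)
    set V := insert y (U.erase x) with hV
    let φ : Pt d → Pt d → ℝ := fun x y =>
      if x ∈ U ∧ x ≠ y ∧ V = insert y (U.erase x) then pHAT d U x y else 0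
    have hφ : ∀ a b, 0 ≤ φ a b := by
      intro a b
      simp only [φ]
      split_ifs
      exacts [pHAT_nonneg _ _ _, le_rfl]
    have hs1 : ∀ a, Summable (φ a) := by
      intro a
      refine summable_of_ne_finset_zero (s := V) fun b hb => ?_
      simp only [φ]
      rw [if_neg]
      rintro ⟨_, _, h3⟩
      apply hb
      rw [h3]
      simp
    have hs2 : Summable (fun a => ∑' b, φ a b) := by
      refine summable_of_ne_finset_zero (s := U) fun a ha => ?_
      have : ∀ b, φ a b = 0 := by
        intro b
        simp only [φ]
        rw [if_neg]
        tauto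
      simp [this]
    have h1 : pHAT d U x y = φ x y := by
      simp only [φ]
      rw [if_pos ⟨hx, hne, hV⟩]
    rw [h1]
    refine ((hs1 x).le_tsum y (fun b _ => hφ x b)).trans ?_
    exact hs2.le_tsum x (fun a _ => tsum_nonneg (hφ a))

/-- The basic move estimate. -/
lemma move_prob {d : ℕ} (hd : 5 ≤ d) (U : Conf d) {x y z e : Pt d} (hx : x ∈ U)
    (hy : y ∉ U.erase x) (he : e ∈ Dset d) (hye : y + e ∈ U.erase x) {k l L : ℕ}
    (hk : k ≤ L) (hl : l + 1 ≤ L)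
    (hp : Pth (↑U : Set (Pt d)) k x z) (hz : ∀ u ∈ U, 8 * (U.card : ℝ) ≤ sq2 (z - u))
    (hq : Pth (↑(U.erase x) : Set (Pt d)) l x y) :
    (1/2) / ((2 * d : ℕ) : ℝ) ^ L / U.card * (1 / ((2 * d : ℕ) : ℝ) ^ L)
      ≤ hatProb d U (insert y (U.erase x)) := by
  refine le_trans ?_ (hatProb_ge U hx hy)
  have hd1 : (1:ℝ) ≤ ((2 * d : ℕ) : ℝ) := by exact_mod_cast (by omega : 1 ≤ 2 * d)
  unfold pHAT
  rw [← Finset.coe_erase]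
  refine mul_le_mul ?_ ?_ (by positivity) (harm_nonneg _ _)
  · refine le_trans ?_ (harm_ge U hx)
    gcongr
    refine le_trans ?_ (esc_path hd U hx hp hz)
    gcongr
  · refine le_trans ?_ (transP_ge (by omega) _ _ _)
    refine le_trans ?_ (hitFrom_path (by omega) he (by exact_mod_cast hye) hq)
    gcongr

/-- The pigeonhole move estimate. -/
lemma move_any {d : ℕ} (hd : 5 ≤ d) (U : Conf d) {x z y0 e : Pt d} (hx : x ∈ U)
    {k L l : ℕ} (hk : k ≤ L)
    (hp : Pth (↑U : Set (Pt d)) k x z) (hz : ∀ u ∈ U, 8 * (U.card : ℝ) ≤ sq2 (z - u))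
    (he : e ∈ Dset d) (hye : y0 + e ∈ U.erase x)
    (hq : Pth (↑(U.erase x) : Set (Pt d)) l x y0) :
    ∃ y, y ∉ U.erase x ∧ (∃ e ∈ Dset d, y + e ∈ U.erase x) ∧
    (1/2) / ((2 * d : ℕ) : ℝ) ^ L / U.card * (1 / (U.card * (2 * d) : ℕ))
      ≤ hatProb d U (insert y (U.erase x)) := by
  have hd1 : (1:ℝ) ≤ ((2 * d : ℕ) : ℝ) := by exact_mod_cast (by omega : 1 ≤ 2 * d)
  have hret : 0 < retProb d (↑(U.erase x) : Set (Pt d)) x := by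
    refine lt_of_lt_of_le ?_ (hitFrom_le_retProb (by omega) _ x y0)
    refine lt_of_lt_of_le ?_ (hitFrom_path (by omega) he (by exact_mod_cast hye) hq)
    positivity
  have hsum := retProb_le_sum (by omega) (U.erase x) x (by simp)
  have hcard : 0 < U.card := Finset.card_pos.2 ⟨x, hx⟩
  have hex : ∃ y ∈ nbrs d (U.erase x), retProb d (↑(U.erase x) : Set (Pt d)) x
      * (1 / (U.card * (2 * d) : ℕ)) ≤ hitFrom d (↑(U.erase x) : Set (Pt d)) x y := by
    by_contra hcon
    push Not at hcon
    have hne : (nbrs d (U.erase x)).Nonempty := by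
      by_contra hemp
      rw [Finset.not_nonempty_iff_eq_empty] at hemp
      rw [hemp, Finset.sum_empty] at hsum
      linarith
    have h1 := Finset.sum_lt_sum_of_nonempty hne hcon
    rw [Finset.sum_const, nsmul_eq_mul] at h1
    have h2 : ((nbrs d (U.erase x)).card : ℝ) ≤ ((U.card * (2 * d) : ℕ) : ℝ) := by
      have := card_nbrs (U.erase x)
      have h3 : (U.erase x).card ≤ U.card := Finset.card_erase_le
      exact_mod_cast this.trans (Nat.mul_le_mul_right _ h3)
    have h3 : (0:ℝ) < ((U.card * (2 * d) : ℕ) : ℝ) := by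
      exact_mod_cast Nat.mul_pos hcard (by omega)
    have h4 : ((nbrs d (U.erase x)).card : ℝ) * (retProb d (↑(U.erase x) : Set (Pt d)) x
      * (1 / (U.card * (2 * d) : ℕ))) ≤ ((U.card * (2 * d) : ℕ) : ℝ) *
        (retProb d (↑(U.erase x) : Set (Pt d)) x * (1 / (U.card * (2 * d) : ℕ))) := by
      gcongr
    have h5 : ((U.card * (2 * d) : ℕ) : ℝ) *
        (retProb d (↑(U.erase x) : Set (Pt d)) x * (1 / (U.card * (2 * d) : ℕ)))
        = retProb d (↑(U.erase x) : Set (Pt d)) x := by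
      field_simp
    linarith
  obtain ⟨y, hy, hle⟩ := hex
  rw [mem_nbrs] at hy
  refine ⟨y, hy.1, hy.2, le_trans ?_ (hatProb_ge U hx hy.1)⟩
  unfold pHAT
  rw [← Finset.coe_erase]
  refine mul_le_mul ?_ ?_ (by positivity) (harm_nonneg _ _)
  · refine le_trans ?_ (harm_ge U hx)
    gcongr
    refine le_trans ?_ (esc_path hd U hx hp hz)
    gcongr
  · unfold transP
    rw [le_div_iff₀ hret, mul_comm]
    exact hle


end part2

section part3
open Classical

lemma single_mem_Dset {d : ℕ} (i : Fin d) {c : ℤ} (hc : c = 1 ∨ c = -1) :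
    (Pi.single i c : Pt d) ∈ Dset d := by
  rw [mem_Dset]
  rcases hc with rfl | rfl
  exacts [⟨i, Or.inl rfl⟩, ⟨i, Or.inr rfl⟩]

lemma box_path {d : ℕ} (A : Set (Pt d)) (n : ℕ) : ∀ z z' : Pt d,
    ∑ i, (z i - z' i).natAbs = n →
    (∀ p, p ≠ z → (∀ i, p i ∈ Set.uIcc (z i) (z' i)) → p ∉ A) → Pth A n z z' := by
  induction n with
  | zero =>
    intro z z' h _
    rw [Finset.sum_eq_zero_iff] at h
    show z = z'
    funext i
    have := h i (Finset.mem_univ i)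
    omega
  | succ n ih =>
    intro z z' h hA
    obtain ⟨i, hi⟩ : ∃ i, z i ≠ z' i := by
      by_contra hcon
      push Not at hcon
      simp [hcon] at h
    let c : ℤ := if z i < z' i then 1 else -1
    have hc : c = 1 ∨ c = -1 := by simp only [c]; split_ifs <;> simp
    have hci : (z i < z' i ∧ c = 1) ∨ (z' i < z i ∧ c = -1) := by
      simp only [c]; split_ifs with h1
      · exact Or.inl ⟨h1, rfl⟩
      · exact Or.inr ⟨by omega, rfl⟩
    have hzi : (z + Pi.single i c : Pt d) i = z i + c := by simp
    have hzj : ∀ j, j ≠ i → (z + Pi.single i c : Pt d) j = z j := by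
      intro j hj; simp [hj]
    refine ⟨Pi.single i c, single_mem_Dset i hc, ?_, ih _ _ ?_ ?_⟩
    · apply hA
      · intro heq
        have := congrFun heq i
        rw [hzi] at this
        omega
      · intro j
        by_cases hj : j = i
        · subst hj
          rw [hzi, Set.mem_uIcc]; omega
        · rw [hzj j hj]; exact Set.left_mem_uIcc
    · rw [← Finset.add_sum_erase _ _ (Finset.mem_univ i)] at h ⊢
      have : ∑ j ∈ Finset.univ.erase i, ((z + Pi.single i c : Pt d) j - z' j).natAbs
          = ∑ j ∈ Finset.univ.erase i, (z j - z' j).natAbs := by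
        refine Finset.sum_congr rfl fun j hj => ?_
        rw [hzj j (Finset.ne_of_mem_erase hj)]
      rw [this, hzi]
      omega
    · intro p _ hp
      apply hA
      · intro heq
        have := hp i
        rw [hzi, Set.mem_uIcc, heq] at this
        omega
      · intro j
        by_cases hj : j = i
        · subst hj
          have := hp j
          rw [hzi, Set.mem_uIcc] at this
          rw [Set.mem_uIcc]; omega
        · have := hp j
          rwa [hzj j hj] at this

lemma exists_first_hit {d : ℕ} (W : Set (Pt d)) (k : ℕ) : ∀ x w : Pt d, x ∉ W → w ∈ W →
    Pth (∅ : Set (Pt d)) k x w → ∃ l y e, e ∈ Dset d ∧ y + e ∈ W ∧ Pth W l x y := by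
  induction k with
  | zero => rintro x w hx hw rfl; exact absurd hw hx
  | succ k ih =>
    rintro x w hx hw ⟨e, he, -, h⟩
    by_cases hxe : x + e ∈ W
    · exact ⟨0, x, e, he, hxe, rfl⟩
    · obtain ⟨l, y, e', he', hy, hp⟩ := ih _ w hxe hw h
      exact ⟨l + 1, y, e', he', hy, e, he, hxe, hp⟩

/-- Sup-norm proximity. -/
def Near {d : ℕ} (k : ℕ) (x y : Pt d) : Prop := ∀ i, |x i - y i| ≤ (k : ℤ)

lemma Near.mono {d : ℕ} {k l : ℕ} (h : k ≤ l) {x y : Pt d} (hx : Near k x y) : Near l x y := by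
  intro i; have := hx i; omega

lemma Near.symm {d : ℕ} {k : ℕ} {x y : Pt d} (hx : Near k x y) : Near k y x := by
  intro i; have := hx i; rw [abs_le] at *; omega

lemma Near.trans {d : ℕ} {k l : ℕ} {x y z : Pt d} (hx : Near k x y) (hy : Near l y z) :
    Near (k + l) x z := by
  intro i; have := hx i; have := hy i; rw [abs_le] at *; push_cast; omega

lemma near_self {d : ℕ} (k : ℕ) (x : Pt d) : Near k x x := by
  intro i; simp

lemma sum_natAbs_le {d : ℕ} {x y o : Pt d} {M : ℕ} (hx : Near M x o) (hy : Near M y o) :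
    ∑ i, (x i - y i).natAbs ≤ d * (2 * M) := by
  have : ∀ i ∈ (Finset.univ : Finset (Fin d)), (x i - y i).natAbs ≤ 2 * M := by
    intro i _
    have := hx i; have := hy i; rw [abs_le] at *; omega
  have := Finset.sum_le_card_nsmul _ _ _ this
  simpa using this

lemma sq2_ge_of {d : ℕ} {x : Pt d} {n : ℕ} (i : Fin d) (h : 4 * (n:ℤ) ≤ |x i|) :
    8 * (n : ℝ) ≤ sq2 x := by
  refine le_trans ?_ (sq2_ge x i)
  have h1 : (4:ℝ) * n ≤ |(x i : ℝ)| := by exact_mod_cast h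
  rw [← sq_abs]
  rcases Nat.eq_zero_or_pos n with rfl | hn
  · simp; positivity
  have hn' : (1:ℝ) ≤ n := by exact_mod_cast hn
  nlinarith

section up
variable {d n r : ℕ} {U : Conf d} {o x : Pt d} {i2 : Fin d}

/-- the top point above `x` -/
def top (n r : ℕ) (o x : Pt d) (i2 : Fin d) : Pt d := Function.update x i2 (o i2 + r + 4 * n)

lemma top_i2 : top n r o x i2 i2 = o i2 + r + 4 * n := by simp [top]
lemma top_ne {i : Fin d} (h : i ≠ i2) : top n r o x i2 i = x i := by simp [top, h]

lemma top_near (hx : Near r x o) : Near (r + 4 * n) (top n r o x i2) o := by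
  intro i
  by_cases h : i = i2
  · subst h; rw [top_i2, abs_le]; push_cast; omega
  · rw [top_ne h]; have := hx i; rw [abs_le] at *; push_cast; omega

lemma up_path (hU : ∀ u ∈ U, Near r u o ∨ ¬ Near (r + 8 * n) u o) (hx : Near r x o)
    (hcol : ∀ u ∈ U, Near r u o → (∀ i, i ≠ i2 → u i = x i) → u i2 ≤ x i2) :
    ∃ k ≤ d * (2 * (r + 4 * n)), Pth (↑U : Set (Pt d)) k x (top n r o x i2) := by
  refine ⟨_, sum_natAbs_le (hx.mono (by omega)) (top_near (i2 := i2) hx), box_path _ _ _ _ rfl ?_⟩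
  intro p hp hb hpU
  have hpU : p ∈ U := by exact_mod_cast hpU
  have h1 : ∀ i, i ≠ i2 → p i = x i := by
    intro i hi
    have := hb i
    rw [top_ne hi] at this
    simpa using this
  have h2 := hb i2
  rw [top_i2, Set.mem_uIcc] at h2
  have hx2 := hx i2
  rw [abs_le] at hx2
  rcases hU p hpU with h | h
  · have := hcol p hpU h h1
    apply hp
    funext i
    by_cases hi : i = i2
    · subst hi; omega
    · exact h1 i hi
  · apply h
    intro i
    by_cases hi : i = i2
    · subst hi; rw [abs_le]; push_cast; omega
    · rw [h1 i hi]; have := hx i; push_cast; omega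

lemma top_far (hU : ∀ u ∈ U, Near r u o ∨ ¬ Near (r + 8 * n) u o) (hx : Near r x o) :
    ∀ u ∈ U, 8 * (n : ℝ) ≤ sq2 (top n r o x i2 - u) := by
  intro u hu
  rcases hU u hu with h | h
  · refine sq2_ge_of i2 ?_
    rw [Pi.sub_apply, top_i2]
    have := h i2
    rw [abs_le] at this
    rw [le_abs]; omega
  · unfold Near at h
    push Not at h
    obtain ⟨i, hi⟩ := h
    refine sq2_ge_of i ?_
    have := top_near (n := n) (i2 := i2) hx i
    rw [Pi.sub_apply]
    rw [abs_le] at this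
    rw [lt_abs] at hi
    rw [le_abs]
    push_cast at *
    omega

end up

/-- path length bound -/
def Lr (d n r : ℕ) : ℕ := 3 * (d * (2 * (r + 4 * n))) + 1

/-- move constant -/
noncomputable def cst (d n r : ℕ) : ℝ :=
  (1/2) / ((2 * d : ℕ) : ℝ) ^ (Lr d n r) / n * (1 / ((2 * d : ℕ) : ℝ) ^ (Lr d n r))

lemma cst_pos {d n : ℕ} (r : ℕ) (hd : 5 ≤ d) (hn : 0 < n) : 0 < cst d n r := by
  have : 0 < 2 * d := by omega
  have : (0:ℝ) < ((2 * d : ℕ) : ℝ) := by exact_mod_cast this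
  have : (0:ℝ) < n := by exact_mod_cast hn
  unfold cst
  positivity

/-- The main controlled move. -/
lemma main_move {d n r : ℕ} (hd : 5 ≤ d) (hn : 0 < n) {U : Conf d} (hcard : U.card = n)
    {o x y e : Pt d} (i2 : Fin d)
    (hU : ∀ u ∈ U, Near r u o ∨ ¬ Near (r + 8 * n) u o) (hxU : x ∈ U) (hx : Near r x o)
    (hy : Near r y o)
    (hcolx : ∀ u ∈ U, Near r u o → (∀ i, i ≠ i2 → u i = x i) → u i2 ≤ x i2)
    (hcoly : ∀ u ∈ U, u ≠ x → Near r u o → (∀ i, i ≠ i2 → u i = y i) → u i2 < y i2)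
    (he : e ∈ Dset d) (hye : y + e ∈ U.erase x) :
    (insert y (U.erase x)).card = n ∧ cst d n r ≤ hatProb d U (insert y (U.erase x)) := by
  have hyU : y ∉ U.erase x := by
    intro h
    rw [Finset.mem_erase] at h
    exact absurd (hcoly y h.2 h.1 hy (fun _ _ => rfl)) (lt_irrefl _)
  refine ⟨?_, ?_⟩
  · rw [Finset.card_insert_of_notMem hyU, Finset.card_erase_of_mem hxU]
    omega
  obtain ⟨k, hk, hp⟩ := up_path hU hx hcolx
  have hz := top_far (n := n) (i2 := i2) hU hx
  have h2 : Pth (↑U : Set (Pt d)) (∑ i, (top n r o x i2 i - top n r o y i2 i).natAbs)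
      (top n r o x i2) (top n r o y i2) := by
    refine box_path _ _ _ _ rfl ?_
    intro p _ hb hpU
    have hpU : p ∈ U := by exact_mod_cast hpU
    have hp2 := hb i2
    rw [top_i2, top_i2, Set.uIcc_self, Set.mem_singleton_iff] at hp2
    rcases hU p hpU with h | h
    · have := h i2
      rw [abs_le] at this
      omega
    · apply h
      intro i
      have := hb i
      have h1 := top_near (n := n) (i2 := i2) hx i
      have h2 := top_near (n := n) (i2 := i2) hy i
      rw [Set.mem_uIcc] at this
      rw [abs_le] at *
      push_cast at *
      omega
  have h3 : Pth (↑(U.erase x) : Set (Pt d)) (∑ i, (top n r o y i2 i - y i).natAbs)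
      (top n r o y i2) y := by
    refine box_path _ _ _ _ rfl ?_
    intro p _ hb hpU
    have hpU : p ∈ U.erase x := by exact_mod_cast hpU
    rw [Finset.mem_erase] at hpU
    have h1 : ∀ i, i ≠ i2 → p i = y i := by
      intro i hi
      have := hb i
      rw [top_ne hi] at this
      simpa using this
    have h2 := hb i2
    rw [top_i2, Set.mem_uIcc] at h2
    have hy2 := hy i2
    rw [abs_le] at hy2
    rcases hU p hpU.2 with h | h
    · have := hcoly p hpU.2 hpU.1 h h1
      omega
    · apply h
      intro i
      by_cases hi : i = i2
      · subst hi; rw [abs_le]; push_cast; omega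
      · rw [h1 i hi]; have := hy i; push_cast; omega
  have hsub : (↑(U.erase x) : Set (Pt d)) ⊆ ↑U := by
    exact_mod_cast Finset.erase_subset x U
  have hq := ((hp.trans h2).mono hsub).trans h3
  have l2 := sum_natAbs_le (top_near (n := n) (i2 := i2) hx) (top_near (n := n) (i2 := i2) hy)
  have l3 := sum_natAbs_le (top_near (n := n) (i2 := i2) hy) (hy.mono (Nat.le_add_right r (4 * n)))
  have := move_prob hd U hxU hyU he hye (L := Lr d n r) (by unfold Lr; omega)
    (by unfold Lr; omega) hp (by rw [hcard]; exact hz) hq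
  rw [hcard] at this
  exact this

/-- single-move constant -/
noncomputable def cst1 (d n : ℕ) : ℝ :=
  (1/2) / ((2 * d : ℕ) : ℝ) ^ (d * (2 * (4 * n))) / n * (1 / ((n * (2 * d) : ℕ) : ℝ))

lemma cst1_pos {d n : ℕ} (hd : 5 ≤ d) (hn : 0 < n) : 0 < cst1 d n := by
  have h0 : 0 < 2 * d := by omega
  have : (0:ℝ) < ((2 * d : ℕ) : ℝ) := by exact_mod_cast h0
  have : (0:ℝ) < n := by exact_mod_cast hn
  have : (0:ℝ) < ((n * (2 * d) : ℕ) : ℝ) := by exact_mod_cast Nat.mul_pos hn h0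
  unfold cst1
  positivity

/-- An isolated point can be moved next to some other point. -/
lemma single_move {d n : ℕ} (hd : 5 ≤ d) (hn : 2 ≤ n) {U : Conf d} (hcard : U.card = n)
    {x : Pt d} (hxU : x ∈ U) (hU : ∀ u ∈ U, u ≠ x → ¬ Near (8 * n) u x) :
    ∃ y, (∃ w ∈ U, w ≠ x ∧ Near 1 y w) ∧ (insert y (U.erase x)).card = n ∧
      cst1 d n ≤ hatProb d U (insert y (U.erase x)) := by
  let i2 : Fin d := ⟨1, by omega⟩
  have hU' : ∀ u ∈ U, Near 0 u x ∨ ¬ Near (0 + 8 * n) u x := by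
    intro u hu
    by_cases h : u = x
    · left; rw [h]; exact near_self 0 x
    · right; rw [zero_add]; exact hU u hu h
  obtain ⟨k, hk, hp⟩ := up_path (i2 := i2) hU' (near_self 0 x) (by
    intro u _ h _
    have := h i2
    rw [abs_le] at this
    push_cast at this
    omega)
  have hz := top_far (n := n) (i2 := i2) hU' (near_self 0 x)
  obtain ⟨w, hw⟩ : (U.erase x).Nonempty := by
    rw [← Finset.card_pos, Finset.card_erase_of_mem hxU]; omega
  obtain ⟨l, y0, e, he, hy0, hq⟩ := exists_first_hit (↑(U.erase x) : Set (Pt d)) _ x w (by simp)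
    (by exact_mod_cast hw) (box_path _ _ _ _ rfl (by simp))
  obtain ⟨y, hy1, ⟨e', he', hye'⟩, hprob⟩ := move_any hd U hxU
    (L := d * (2 * (4 * n))) (by simpa using hk) hp (by rw [hcard]; exact hz) he
    (by exact_mod_cast hy0) hq
  refine ⟨y, ⟨y + e', (Finset.mem_erase.1 hye').2, (Finset.mem_erase.1 hye').1, ?_⟩, ?_, ?_⟩
  · intro i
    rw [mem_Dset] at he'
    obtain ⟨j, rfl | rfl⟩ := he' <;> by_cases hij : i = j <;> simp [hij]
  · rw [Finset.card_insert_of_notMem hy1, Finset.card_erase_of_mem hxU]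
    omega
  · rw [hcard] at hprob
    exact hprob


end part3

section part4
open Classical

/-- chains of `k` steps of a relation -/
def Ch {α : Type*} (R : α → α → Prop) : ℕ → α → α → Prop
  | 0, a, b => a = b
  | k + 1, a, b => ∃ c, R a c ∧ Ch R k c b

lemma Ch.trans {α : Type*} {R : α → α → Prop} {k l : ℕ} : ∀ {a b c : α}, Ch R k a b → Ch R l b c →
    Ch R (k + l) a c := by
  induction k with
  | zero => rintro a b c rfl h; simpa using h
  | succ k ih =>
    rintro a b c ⟨x, hx, h1⟩ h
    rw [show k + 1 + l = (k + l) + 1 by omega]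
    exact ⟨x, hx, ih h1 h⟩

lemma Ch.mono {α : Type*} {R S : α → α → Prop} (hRS : ∀ a b, R a b → S a b) {k : ℕ} :
    ∀ {a b : α}, Ch R k a b → Ch S k a b := by
  induction k with
  | zero => intro a b h; exact h
  | succ k ih =>
    rintro a b ⟨x, hx, h1⟩
    exact ⟨x, hRS _ _ hx, ih h1⟩

/-- HAT step of probability at least `c`. -/
def HS (d : ℕ) (c : ℝ) (U V : Conf d) : Prop := V.card = U.card ∧ c ≤ hatProb d U V

lemma HS.mono {d : ℕ} {c c' : ℝ} (h : c' ≤ c) (U V : Conf d) (hS : HS d c U V) : HS d c' U V :=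
  ⟨hS.1, h.trans hS.2⟩

lemma Ch.card {d : ℕ} {c : ℝ} {k : ℕ} : ∀ {U V : Conf d}, Ch (HS d c) k U V → V.card = U.card := by
  induction k with
  | zero => rintro U V rfl; rfl
  | succ k ih =>
    rintro U V ⟨W, hW, h⟩
    rw [ih h, hW.1]

/-! ### one-dimensional moves -/

/-- one-dimensional move within `[0,N]` -/
def S1 (N : ℕ) (J J' : Finset ℕ) : Prop :=
  (∀ i ∈ J, i ≤ N) ∧ ∃ j ∈ J, ∃ j', j' ≤ N ∧ j' ∉ J.erase j ∧
    (∃ w ∈ J.erase j, w = j' + 1 ∨ j' = w + 1) ∧ J' = insert j' (J.erase j)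

/-- good one-dimensional configurations -/
inductive Good1 (a : ℕ) : Finset ℕ → Prop
  | nil : Good1 a ∅
  | two (J : Finset ℕ) (p : ℕ) : Good1 a J → (∀ j ∈ J, j + a < p) → Good1 a (J ∪ {p, p + 1})
  | three (J : Finset ℕ) (p : ℕ) : Good1 a J → (∀ j ∈ J, j + a < p) →
      Good1 a (J ∪ {p, p + 1, p + 2})

lemma S1.mono {N N' : ℕ} (h : N ≤ N') (J J' : Finset ℕ) (hS : S1 N J J') : S1 N' J J' := by
  obtain ⟨h1, j, hj, j', hj', h2, h3, h4⟩ := hS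
  exact ⟨fun i hi => (h1 i hi).trans h, j, hj, j', hj'.trans h, h2, h3, h4⟩

lemma S1.frame {N N' : ℕ} (h : N ≤ N') {I : Finset ℕ} (hI : ∀ i ∈ I, N < i ∧ i ≤ N')
    (J J' : Finset ℕ) (hS : S1 N J J') : S1 N' (J ∪ I) (J' ∪ I) := by
  obtain ⟨h1, j, hj, j', hj', h2, ⟨w, hw, hw2⟩, h4⟩ := hS
  have hjI : j ∉ I := fun hc => by have := hI j hc; have := h1 j hj; omega
  have hjI' : j' ∉ I := fun hc => by have := hI j' hc; omega
  have he : (J ∪ I).erase j = J.erase j ∪ I := by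
    rw [Finset.erase_union_distrib, Finset.erase_eq_of_notMem hjI]
  refine ⟨?_, j, Finset.mem_union_left _ hj, j', hj'.trans h, ?_, ⟨w, ?_, hw2⟩, ?_⟩
  · intro i hi
    rcases Finset.mem_union.1 hi with hi | hi
    · exact (h1 i hi).trans h
    · exact (hI i hi).2
  · rw [he, Finset.mem_union]; tauto
  · rw [he]; exact Finset.mem_union_left _ hw
  · rw [he, h4, Finset.insert_union]

lemma frame_chain {N N' : ℕ} (h : N ≤ N') {I : Finset ℕ} (hI : ∀ i ∈ I, N < i ∧ i ≤ N') {k : ℕ} :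
    ∀ {J J' : Finset ℕ}, Ch (S1 N) k J J' → Ch (S1 N') k (J ∪ I) (J' ∪ I) := by
  induction k with
  | zero => rintro J J' rfl; rfl
  | succ k ih =>
    rintro J J' ⟨K, hK, h1⟩
    exact ⟨K ∪ I, S1.frame h hI _ _ hK, ih h1⟩

lemma dimer_walk {N : ℕ} (A : ℕ) : ∀ {I : Finset ℕ} {p : ℕ}, (∀ i ∈ I, i < p) →
    p + A + 1 ≤ N → Ch (S1 N) A (I ∪ {p, p + 1}) (I ∪ {p + A, p + A + 1}) := by
  induction A with
  | zero => intro I p _ _; rfl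
  | succ A ih =>
    intro I p hI hN
    have hstep : S1 N (I ∪ {p, p + 1}) (I ∪ {p + 1, p + 1 + 1}) := by
      refine ⟨?_, p, by simp, p + 2, by omega, ?_, ⟨p + 1, by simp, Or.inr rfl⟩, ?_⟩
      · intro i hi
        simp only [Finset.mem_union, Finset.mem_insert, Finset.mem_singleton] at hi
        rcases hi with hi | hi | hi
        · have := hI i hi; omega
        · omega
        · omega
      · intro hc
        simp only [Finset.mem_erase, Finset.mem_union, Finset.mem_insert, Finset.mem_singleton] at hc
        rcases hc.2 with hi | hi | hi
        · have := hI _ hi; omega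
        · omega
        · omega
      · ext i
        simp only [Finset.mem_erase, Finset.mem_union, Finset.mem_insert, Finset.mem_singleton]
        constructor
        · rintro (hi | hi | hi)
          · have := hI i hi
            exact Or.inr ⟨by omega, Or.inl hi⟩
          · exact Or.inr ⟨by omega, by omega⟩
          · exact Or.inl (by omega)
        · rintro (hi | ⟨hne, hi | hi | hi⟩)
          · omega
          · exact Or.inl hi
          · omega
          · omega
    refine ⟨_, hstep, ?_⟩
    have := ih (I := I) (p := p + 1) (fun i hi => by have := hI i hi; omega) (by omega)
    rw [show p + 1 + A = p + (A + 1) by omega] at this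
    exact this

lemma one_dim (a : ℕ) (m : ℕ) : 2 ≤ m → ∃ N k J, Ch (S1 N) k (Finset.range m) J ∧
    (∀ j ∈ J, j ≤ N) ∧ Good1 a J := by
  induction m using Nat.strong_induction_on with
  | _ m ih =>
    intro hm
    by_cases h4 : m < 4
    · refine ⟨2, 0, Finset.range m, rfl, fun j hj => by have := Finset.mem_range.1 hj; omega, ?_⟩
      have h23 : m = 2 ∨ m = 3 := by omega
      rcases h23 with rfl | rfl
      · have := Good1.two (a := a) ∅ 0 Good1.nil (by simp)
        convert this using 1
        ext i
        simp
        omega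
      · have := Good1.three (a := a) ∅ 0 Good1.nil (by simp)
        convert this using 1
        ext i
        simp
        omega
    · obtain ⟨N, k, J, hch, hJ, hg⟩ := ih (m - 2) (by omega) (by omega)
      let A := N + a + 1
      let p := m - 2 + A
      have h0 : Finset.range m = Finset.range (m - 2) ∪ {m - 2, m - 2 + 1} := by
        ext i
        simp only [Finset.mem_union, Finset.mem_insert, Finset.mem_singleton, Finset.mem_range]
        omega
      refine ⟨p + 1, A + k, J ∪ {p, p + 1}, ?_, ?_, ?_⟩
      · rw [h0]
        refine (dimer_walk A (fun i hi => Finset.mem_range.1 hi) (by simp only [p]; omega)).trans ?_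
        refine frame_chain (N := N) (by simp only [p, A]; omega) ?_ hch
        intro i hi
        simp only [Finset.mem_insert, Finset.mem_singleton] at hi
        simp only [p, A] at *
        omega
      · intro j hj
        simp only [Finset.mem_union, Finset.mem_insert, Finset.mem_singleton] at hj
        rcases hj with hj | hj | hj
        · have := hJ j hj
          simp only [p, A]; omega
        · omega
        · omega
      · refine Good1.two J p hg fun j hj => ?_
        have := hJ j hj
        simp only [p, A]; omega

lemma one_dim_unif (a n : ℕ) : ∃ N K, ∀ m, 2 ≤ m → m ≤ n → ∃ k J, k ≤ K ∧
    Ch (S1 N) k (Finset.range m) J ∧ (∀ j ∈ J, j ≤ N) ∧ Good1 a J := by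
  induction n with
  | zero => exact ⟨0, 0, fun m h1 h2 => by omega⟩
  | succ n ih =>
    obtain ⟨N, K, h⟩ := ih
    by_cases hn : 2 ≤ n + 1
    · obtain ⟨N', k', J', hch, hJ, hg⟩ := one_dim a (n + 1) hn
      refine ⟨max N N', max K k', fun m h1 h2 => ?_⟩
      rcases Nat.lt_or_ge n m with h3 | h3
      · obtain rfl : m = n + 1 := by omega
        exact ⟨k', J', le_max_right _ _, hch.mono (S1.mono (le_max_right _ _)),
          fun j hj => (hJ j hj).trans (le_max_right _ _), hg⟩
      · obtain ⟨k, J, hk, hch, hJ, hg⟩ := h m h1 h3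
        exact ⟨k, J, hk.trans (le_max_left _ _), hch.mono (S1.mono (le_max_left _ _)),
          fun j hj => (hJ j hj).trans (le_max_left _ _), hg⟩
    · exact ⟨N, K, fun m h1 h2 => by omega⟩

/-! ### good configurations -/

/-- Unions of well separated reference dimers and trimers. -/
inductive Good (d a : ℕ) : Conf d → Prop
  | nil : Good d a ∅
  | add (V A : Conf d) : Good d a V → A ∈ Ref d → (∀ v ∈ V, ∀ x ∈ A, ¬ Near a v x) →
      Good d a (V ∪ A)

lemma Good.union {d a : ℕ} {V V' : Conf d} (hV : Good d a V) (hV' : Good d a V') :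
    (∀ v ∈ V, ∀ x ∈ V', ¬ Near a v x) → Good d a (V ∪ V') := by
  induction hV' with
  | nil => intro _; simpa using hV
  | add W A hW hA hsep ih =>
    intro h
    rw [← Finset.union_assoc]
    refine Good.add _ _ (ih fun v hv x hx => h v hv x (Finset.mem_union_left _ hx)) hA ?_
    intro v hv x hx
    rcases Finset.mem_union.1 hv with hv | hv
    · exact h v hv x (Finset.mem_union_right _ hx)
    · exact hsep v hv x hx

section line
variable {d : ℕ} (i1 : Fin d)

/-- points on the line -/
def lp (v : Pt d) (j : ℕ) : Pt d := v - Pi.single i1 (j : ℤ)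

lemma lp_i1 (v : Pt d) (j : ℕ) : lp i1 v j i1 = v i1 - j := by simp [lp]
lemma lp_ne (v : Pt d) (j : ℕ) {i : Fin d} (h : i ≠ i1) : lp i1 v j i = v i := by simp [lp, h]

lemma lp_inj (v : Pt d) : Function.Injective (lp i1 v) := by
  intro j k h
  have := congrFun h i1
  rw [lp_i1, lp_i1] at this
  omega

lemma lp_zero (v : Pt d) : lp i1 v 0 = v := by simp [lp]

/-- a configuration on a line -/
noncomputable def line (v : Pt d) (J : Finset ℕ) : Conf d := J.image (lp i1 v)

lemma mem_line {v : Pt d} {J : Finset ℕ} {u : Pt d} : u ∈ line i1 v J ↔ ∃ j ∈ J, lp i1 v j = u := by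
  simp [line]

lemma lp_near {v o : Pt d} {r N j : ℕ} (hv : Near r v o) (hj : j ≤ N) : Near (r + N) (lp i1 v j) o := by
  intro i
  have := hv i
  by_cases h : i = i1
  · subst h; rw [lp_i1]; rw [abs_le] at *; push_cast; omega
  · rw [lp_ne i1 v j h]; push_cast; omega

lemma lp_add (v : Pt d) (j : ℕ) : lp i1 v (j + 1) + Pi.single i1 1 = lp i1 v j := by
  funext i
  by_cases h : i = i1
  · subst h; simp [lp]; ring
  · simp [lp, h]

lemma lp_sub (v : Pt d) (j : ℕ) : lp i1 v j + Pi.single i1 (-1) = lp i1 v (j + 1) := by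
  funext i
  by_cases h : i = i1
  · subst h; simp [lp]; ring
  · simp [lp, h]

lemma e1v_eq (h : (i1 : ℕ) = 0) : e1v d = Pi.single i1 1 := by
  funext i
  unfold e1v
  by_cases hi : i = i1
  · subst hi; simp [h]
  · have : (i : ℕ) ≠ 0 := fun hc => hi (Fin.ext (by omega))
    simp [hi, this]

lemma line_good (h : (i1 : ℕ) = 0) {a : ℕ} {J : Finset ℕ} (v : Pt d) (hJ : Good1 a J) :
    Good d a (line i1 v J) := by
  have hsep : ∀ {j p : ℕ}, j + a < p → ¬ Near a (lp i1 v j) (lp i1 v p) := by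
    intro j p hjp hc
    have := hc i1
    rw [lp_i1, lp_i1, abs_le] at this
    omega
  have key : ∀ (J I : Finset ℕ) (p : ℕ), (∀ j ∈ J, j + a < p) → (∀ i ∈ I, p ≤ i) →
      ∀ u ∈ line i1 v J, ∀ x ∈ line i1 v I, ¬ Near a u x := by
    intro J I p h1 h2 u hu x hx
    obtain ⟨j, hj, rfl⟩ := (mem_line i1).1 hu
    obtain ⟨i, hi, rfl⟩ := (mem_line i1).1 hx
    refine hsep ?_
    have := h1 j hj
    have := h2 i hi
    omega
  induction hJ with
  | nil => simpa [line] using Good.nil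
  | two J p _ hp ih =>
    unfold line at *
    rw [Finset.image_union]
    refine Good.add _ _ ih ?_ ?_
    · refine ⟨lp i1 v (p + 1), Or.inl ?_⟩
      rw [e1v_eq i1 h, lp_add]
      simp [Finset.image_insert, Finset.pair_comm]
    · refine key J _ p hp ?_
      intro i hi
      simp at hi; omega
  | three J p _ hp ih =>
    unfold line at *
    rw [Finset.image_union]
    refine Good.add _ _ ih ?_ ?_
    · refine ⟨lp i1 v (p + 2), Or.inr ?_⟩
      rw [e1v_eq i1 h, lp_add i1 v (p + 1), lp_add]
      ext u
      simp only [Finset.image_insert, Finset.image_singleton, Finset.mem_insert,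
        Finset.mem_singleton]
      tauto
    · refine key J _ p hp ?_
      intro i hi
      simp at hi; omega

variable (i2 : Fin d)

lemma line_step (h12 : i2 ≠ i1) {n r N : ℕ} (hd : 5 ≤ d) (hn : 0 < n) {v o : Pt d} {J J' : Finset ℕ}
    {B : Conf d}
    (hcard : (line i1 v J ∪ B).card = n) (hv : Near r v o)
    (hB : ∀ b ∈ B, ¬ Near (r + N + 8 * n) b o) (hS : S1 N J J') :
    HS d (cst d n (r + N)) (line i1 v J ∪ B) (line i1 v J' ∪ B) := by
  obtain ⟨h1, j, hj, j', hj', h2, ⟨w, hw, hw2⟩, h4⟩ := hS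
  have hBn : ∀ b ∈ B, ¬ Near (r + N) b o := fun b hb hc => hB b hb (hc.mono (by omega))
  have hjB : lp i1 v j ∉ B := fun hc => hBn _ hc (lp_near i1 hv (h1 j hj))
  have he : (line i1 v J ∪ B).erase (lp i1 v j) = line i1 v (J.erase j) ∪ B := by
    rw [Finset.erase_union_distrib, Finset.erase_eq_of_notMem hjB]
    unfold line
    rw [Finset.image_erase (lp_inj i1 v)]
  have hV : line i1 v J' ∪ B = insert (lp i1 v j') ((line i1 v J ∪ B).erase (lp i1 v j)) := by
    rw [he, h4, ← Finset.insert_union]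
    unfold line
    rw [Finset.image_insert]
  have hc : ∀ u ∈ line i1 v J ∪ B, Near (r + N) u o → ∃ i ∈ J, lp i1 v i = u := by
    intro u hu hnear
    rcases Finset.mem_union.1 hu with hu | hu
    · exact (mem_line i1).1 hu
    · exact absurd hnear (hBn u hu)
  have hw' : lp i1 v w ∈ (line i1 v J ∪ B).erase (lp i1 v j) := by
    rw [he]
    exact Finset.mem_union_left _ ((mem_line i1).2 ⟨w, hw, rfl⟩)
  obtain ⟨e, heD, hew⟩ : ∃ e ∈ Dset d, lp i1 v j' + e = lp i1 v w := by
    rcases hw2 with rfl | rfl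
    · exact ⟨Pi.single i1 (-1), single_mem_Dset i1 (Or.inr rfl), lp_sub i1 v j'⟩
    · exact ⟨Pi.single i1 1, single_mem_Dset i1 (Or.inl rfl), lp_add i1 v w⟩
  have hmm := main_move (n := n) (r := r + N) hd hn hcard (o := o) (x := lp i1 v j) (y := lp i1 v j')
    (e := e) i2
    (by
      intro u hu
      rcases Finset.mem_union.1 hu with hu | hu
      · obtain ⟨i, hi, rfl⟩ := (mem_line i1).1 hu
        exact Or.inl (lp_near i1 hv (h1 i hi))
      · exact Or.inr (hB u hu))
    (Finset.mem_union_left _ ((mem_line i1).2 ⟨j, hj, rfl⟩))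
    (lp_near i1 hv (h1 j hj)) (lp_near i1 hv hj')
    (by
      intro u hu hnear hcol
      obtain ⟨i, hi, rfl⟩ := hc u hu hnear
      rw [lp_ne i1 v _ h12, lp_ne i1 v _ h12])
    (by
      intro u hu hux hnear hcol
      exfalso
      obtain ⟨i, hi, rfl⟩ := hc u hu hnear
      have := hcol i1 h12.symm
      rw [lp_i1, lp_i1] at this
      have hij : i = j' := by omega
      subst hij
      exact h2 (Finset.mem_erase.2 ⟨fun h => hux (by rw [h]), hi⟩))
    heD (by rw [hew]; exact hw')
  rw [← hV] at hmm
  exact ⟨by rw [hmm.1, hcard], hmm.2⟩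

lemma line_chain (h12 : i2 ≠ i1) {n r N : ℕ} (hd : 5 ≤ d) (hn : 0 < n) {v o : Pt d}
    {B : Conf d} (hv : Near r v o)
    (hB : ∀ b ∈ B, ¬ Near (r + N + 8 * n) b o) {k : ℕ} : ∀ {J J' : Finset ℕ},
    (line i1 v J ∪ B).card = n → Ch (S1 N) k J J' →
    Ch (HS d (cst d n (r + N))) k (line i1 v J ∪ B) (line i1 v J' ∪ B) := by
  induction k with
  | zero => rintro J J' _ rfl; rfl
  | succ k ih =>
    rintro J J' hcard ⟨K, hK, h⟩
    have hs := line_step i1 i2 h12 hd hn hcard hv hB hK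
    exact ⟨_, hs, ih (by rw [hs.1, hcard]) h⟩

lemma gather (h12 : i2 ≠ i1) {n r N : ℕ} (hd : 5 ≤ d) (hn : 0 < n) {v o : Pt d}
    {B : Conf d} (hv : Near r v o)
    (hB : ∀ b ∈ B, ¬ Near (r + N + 8 * n) b o) (q : ℕ) : ∀ (Q : Conf d) (k : ℕ),
    Q.card = q → (∀ u ∈ Q, Near r u o ∧ u ≠ v ∧ v i1 ≤ u i1 ∧ (u i1 = v i1 → v i2 ≤ u i2)) →
    k + q ≤ N → (Q ∪ (line i1 v (Finset.range (k + 1)) ∪ B)).card = n →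
    Ch (HS d (cst d n (r + N))) q (Q ∪ (line i1 v (Finset.range (k + 1)) ∪ B))
      (line i1 v (Finset.range (k + q + 1)) ∪ B) := by
  have hBn : ∀ b ∈ B, ¬ Near (r + N) b o := fun b hb hc => hB b hb (hc.mono (by omega))
  induction q with
  | zero =>
    intro Q k hQ _ _ _
    rw [Finset.card_eq_zero] at hQ
    subst hQ
    simp [Ch]
  | succ q ih =>
    intro Q k hQ hinv hN hcard
    obtain ⟨x, hxQ, hmax⟩ := Finset.exists_max_image Q (fun u => u i2)
      (Finset.card_pos.1 (by omega))
    obtain ⟨hxn, hxv, hx1, hx2⟩ := hinv x hxQ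
    have hxl : ∀ J, x ∉ line i1 v J := by
      intro J hc
      obtain ⟨j, _, hj⟩ := (mem_line i1).1 hc
      have := congrFun hj i1
      rw [lp_i1] at this
      have : j = 0 := by omega
      subst this
      rw [lp_zero] at hj
      exact hxv hj.symm
    have hxB : x ∉ B := fun hc => hBn x hc (hxn.mono (by omega))
    set U := Q ∪ (line i1 v (Finset.range (k + 1)) ∪ B) with hU
    have hcase : ∀ u ∈ U, Near (r + N) u o →
        u ∈ Q ∨ ∃ j, j < k + 1 ∧ lp i1 v j = u := by
      intro u hu hnear
      rcases Finset.mem_union.1 hu with hu | hu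
      · exact Or.inl hu
      rcases Finset.mem_union.1 hu with hu | hu
      · obtain ⟨j, hj, rfl⟩ := (mem_line i1).1 hu
        exact Or.inr ⟨j, Finset.mem_range.1 hj, rfl⟩
      · exact absurd hnear (hBn u hu)
    have hV : insert (lp i1 v (k + 1)) (U.erase x) =
        (Q.erase x) ∪ (line i1 v (Finset.range (k + 1 + 1)) ∪ B) := by
      rw [hU, Finset.erase_union_distrib, Finset.erase_union_distrib,
        Finset.erase_eq_of_notMem hxB, Finset.erase_eq_of_notMem (hxl _),
        Finset.range_add_one (n := k + 1)]
      unfold line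
      rw [Finset.image_insert]
      ext u
      simp only [Finset.mem_union, Finset.mem_insert]
      tauto
    have hmm := main_move (n := n) (r := r + N) hd hn hcard (o := o) (x := x)
      (y := lp i1 v (k + 1)) (e := Pi.single i1 1) i2
      (by
        intro u hu
        rcases Finset.mem_union.1 hu with hu | hu
        · exact Or.inl ((hinv u hu).1.mono (by omega))
        rcases Finset.mem_union.1 hu with hu | hu
        · obtain ⟨j, hj, rfl⟩ := (mem_line i1).1 hu
          exact Or.inl (lp_near i1 hv (by have := Finset.mem_range.1 hj; omega))
        · exact Or.inr (hB u hu))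
      (Finset.mem_union_left _ hxQ) (hxn.mono (by omega)) (lp_near i1 hv (by omega))
      (by
        intro u hu hnear hcol
        rcases hcase u hu hnear with hu | ⟨j, hj, rfl⟩
        · exact hmax u hu
        · have := hcol i1 h12.symm
          rw [lp_i1] at this
          rw [lp_ne i1 v _ h12]
          exact hx2 (by omega))
      (by
        intro u hu hux hnear hcol
        exfalso
        have h1 := hcol i1 h12.symm
        rw [lp_i1] at h1
        rcases hcase u hu hnear with hu | ⟨j, hj, rfl⟩
        · have := (hinv u hu).2.2.1
          omega
        · rw [lp_i1] at h1
          omega)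
      (single_mem_Dset i1 (Or.inl rfl))
      (by
        rw [lp_add, Finset.mem_erase]
        have hm : lp i1 v k ∈ line i1 v (Finset.range (k + 1)) :=
          (mem_line i1).2 ⟨k, by simp, rfl⟩
        refine ⟨fun hc => hxl _ (hc ▸ hm), ?_⟩
        exact Finset.mem_union_right _ (Finset.mem_union_left _ hm))
    rw [hV] at hmm
    refine ⟨_, ⟨by rw [hmm.1, hcard], hmm.2⟩, ?_⟩
    have := ih (Q.erase x) (k + 1) (by rw [Finset.card_erase_of_mem hxQ]; omega)
      (fun u hu => hinv u (Finset.mem_of_mem_erase hu)) (by omega) hmm.1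
    rw [show k + 1 + q + 1 = k + (q + 1) + 1 by omega] at this
    exact this

end line

/-- Processing one cluster. -/
lemma cluster {d n : ℕ} (hd : 5 ≤ d) (hn : 0 < n) (a r1 : ℕ) : ∃ r2 K, r1 ≤ r2 ∧
    ∀ (o : Pt d) (Q B : Conf d), 2 ≤ Q.card → (Q ∪ B).card = n → (∀ u ∈ Q, Near r1 u o) →
    (∀ b ∈ B, ¬ Near (r2 + 8 * n) b o) → ∃ V k, k ≤ K ∧ Good d a V ∧ (∀ u ∈ V, Near r2 u o) ∧
      Ch (HS d (cst d n r2)) k (Q ∪ B) (V ∪ B) := by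
  obtain ⟨N0, K, h1d⟩ := one_dim_unif a n
  set N := max N0 n with hN
  refine ⟨r1 + N, n + K, by omega, ?_⟩
  intro o Q B hQ2 hcard hQ hB
  let i1 : Fin d := ⟨0, by omega⟩
  let i2 : Fin d := ⟨1, by omega⟩
  have h12 : i2 ≠ i1 := by simp [i1, i2]
  obtain ⟨v, hvQ, hvmin⟩ : ∃ v ∈ Q, ∀ u ∈ Q, v i1 ≤ u i1 ∧ (u i1 = v i1 → v i2 ≤ u i2) := by
    obtain ⟨v0, hv0, hmin0⟩ := Finset.exists_min_image Q (fun u => u i1)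
      (Finset.card_pos.1 (by omega))
    obtain ⟨v, hv, hmin⟩ := Finset.exists_min_image (Q.filter (fun u => u i1 = v0 i1)) (fun u => u i2)
      ⟨v0, by simp [hv0]⟩
    rw [Finset.mem_filter] at hv
    refine ⟨v, hv.1, fun u hu => ⟨?_, fun h => ?_⟩⟩
    · rw [hv.2]; exact hmin0 u hu
    · exact hmin u (Finset.mem_filter.2 ⟨hu, h.trans hv.2⟩)
  have hQn : Q.card ≤ n := by rw [← hcard]; exact Finset.card_le_card Finset.subset_union_left
  have hQe : Q ∪ B = Q.erase v ∪ (line i1 v (Finset.range (0 + 1)) ∪ B) := by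
    unfold line
    simp only [zero_add, Finset.range_one, Finset.image_singleton, lp_zero]
    rw [← Finset.union_assoc, Finset.union_comm (Q.erase v), ← Finset.insert_eq,
      Finset.insert_erase hvQ]
  have hA := gather i1 i2 h12 hd hn (hQ v hvQ) hB (Q.card - 1) (Q.erase v) 0
    (by rw [Finset.card_erase_of_mem hvQ])
    (by
      intro u hu
      rw [Finset.mem_erase] at hu
      exact ⟨hQ u hu.2, hu.1, hvmin u hu.2⟩)
    (by omega) (by rw [← hQe]; exact hcard)
  rw [← hQe] at hA
  rw [show 0 + (Q.card - 1) + 1 = Q.card by omega] at hA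
  obtain ⟨k, J, hk, hch, hJ, hg⟩ := h1d Q.card hQ2 hQn
  have hBch := line_chain i1 i2 h12 hd hn (hQ v hvQ) hB (by rw [hA.card, hcard])
    (hch.mono (S1.mono (le_max_left N0 n)))
  refine ⟨line i1 v J, _, ?_, line_good i1 rfl v hg, ?_, hA.trans hBch⟩
  · omega
  · intro u hu
    obtain ⟨j, hj, rfl⟩ := (mem_line i1).1 hu
    exact lp_near i1 (hQ v hvQ) ((hJ j hj).trans (le_max_left _ _))


end part4

section part5
open Classical

lemma scale_gap {d n : ℕ} (ρ : ℕ → ℕ) (hρ : Monotone ρ) (U : Conf d) (hU : U.card = n) :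
    ∃ j, j ≤ n * n ∧ ∀ u ∈ U, ∀ u' ∈ U, Near (ρ (j + 1)) u u' → Near (ρ j) u u' := by
  by_contra! h
  have h' : ∀ j, ∃ p : Pt d × Pt d, j ≤ n * n → p ∈ U ×ˢ U ∧ Near (ρ (j + 1)) p.1 p.2 ∧
      ¬ Near (ρ j) p.1 p.2 := by
    intro j
    by_cases hj : j ≤ n * n
    · obtain ⟨u, hu, u', hu', h1, h2⟩ := h j hj
      exact ⟨(u, u'), fun _ => ⟨Finset.mk_mem_product hu hu', h1, h2⟩⟩
    · exact ⟨0, fun h => absurd h hj⟩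
  choose p hp using h'
  obtain ⟨i, hi, j, hj, hij, heq⟩ := Finset.exists_ne_map_eq_of_card_lt_of_maps_to
    (s := Finset.range (n * n + 1)) (t := U ×ˢ U) (f := p) (by simp [hU])
    (fun j hj => (hp j (by have := Finset.mem_range.1 hj; omega)).1)
  rw [Finset.mem_range] at hi hj
  have key : ∀ i j, i < n * n + 1 → j < n * n + 1 → i < j → p i = p j → False := by
    intro i j hi hj hij heq
    have h1 := (hp i (by omega)).2.1
    have h2 := (hp j (by omega)).2.2
    rw [heq] at h1
    exact h2 (h1.mono (hρ (by omega)))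
  rcases lt_or_gt_of_ne hij with h | h
  · exact key i j hi hj h heq
  · exact key j i hj hi h heq.symm

/-- `U` is covered by `r`-boxes around `R`-separated centers. -/
def Clus {d : ℕ} (O : Conf d) (r R : ℕ) (U : Conf d) : Prop :=
  (∀ u ∈ U, ∃ o ∈ O, Near r u o) ∧ (∀ o ∈ O, ∀ o' ∈ O, o ≠ o' → ¬ Near R o o')

lemma Clus.mono {d : ℕ} {O : Conf d} {r r' R : ℕ} {U : Conf d} (h : r ≤ r') (hC : Clus O r R U) :
    Clus O r' R U :=
  ⟨fun u hu => by obtain ⟨o, ho, hn⟩ := hC.1 u hu; exact ⟨o, ho, hn.mono h⟩, hC.2⟩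

lemma exists_clus {d : ℕ} {r R : ℕ} (U : Conf d)
    (h : ∀ u ∈ U, ∀ u' ∈ U, Near R u u' → Near r u u') : ∃ O, O.card ≤ U.card ∧ Clus O r R U := by
  obtain ⟨O, hO, hmax⟩ := Finset.exists_max_image
    (U.powerset.filter fun O => ∀ o ∈ O, ∀ o' ∈ O, o ≠ o' → ¬ Near R o o') Finset.card
    ⟨∅, by simp⟩
  simp only [Finset.mem_filter, Finset.mem_powerset] at hO hmax
  refine ⟨O, Finset.card_le_card hO.1, ?_, hO.2⟩
  intro u hu
  by_contra! hno
  have hno' : ∀ o ∈ O, ¬ Near R u o := fun o ho hn => hno o ho (h u hu o (hO.1 ho) hn)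
  have huO : u ∉ O := fun hu' => hno u hu' (near_self _ _)
  have := hmax (insert u O) ⟨Finset.insert_subset hu hO.1, ?_⟩
  · rw [Finset.card_insert_of_notMem huO] at this
    omega
  · intro o ho o' ho' hne hn
    rw [Finset.mem_insert] at ho ho'
    rcases ho with h1 | h1
    · rcases ho' with h2 | h2
      · exact hne (h1.trans h2.symm)
      · exact hno' _ h2 (h1 ▸ hn)
    · rcases ho' with h2 | h2
      · exact hno' _ h1 (h2 ▸ hn.symm)
      · exact hO.2 o h1 o' h2 hne hn

lemma singles {d n : ℕ} (hd : 5 ≤ d) (hn : 2 ≤ n) (R : ℕ) : ∀ (N : ℕ) (O U : Conf d) (r : ℕ),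
    O.card ≤ N → U.card = n → Clus O r R U → 2 * (r + N) + 8 * n ≤ R →
    ∃ O' U' k, k ≤ N ∧ O'.card ≤ N ∧ Clus O' (r + N) R U' ∧
      (∀ o ∈ O', 2 ≤ (U'.filter (fun u => Near (r + N) u o)).card) ∧
      Ch (HS d (cst1 d n)) k U U' := by
  intro N
  induction N with
  | zero =>
    intro O U r hO hU hC hR
    have hO0 : O = ∅ := by simpa using hO
    subst hO0
    exact ⟨∅, U, 0, le_rfl, by simp, hC, by simp, rfl⟩
  | succ N ih =>
    intro O U r hO hU hC hR
    by_cases h : ∀ o ∈ O, 2 ≤ (U.filter (fun u => Near r u o)).card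
    · refine ⟨O, U, 0, by omega, hO, hC.mono (by omega), ?_, rfl⟩
      intro o ho
      refine (h o ho).trans (Finset.card_le_card ?_)
      intro u hu
      rw [Finset.mem_filter] at hu ⊢
      exact ⟨hu.1, hu.2.mono (by omega)⟩
    · push Not at h
      obtain ⟨o, ho, hlt⟩ := h
      have hcardE : (O.erase o).card ≤ N := by
        rw [Finset.card_erase_of_mem ho]; omega
      have e1 : r + 1 + N = r + (N + 1) := by omega
      by_cases h0 : (U.filter (fun u => Near r u o)).card = 0
      · rw [Finset.card_eq_zero] at h0
        have hC' : Clus (O.erase o) (r + 1) R U := by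
          refine ⟨?_, fun o1 h1 o2 h2 => hC.2 o1 (Finset.mem_of_mem_erase h1) o2 (Finset.mem_of_mem_erase h2)⟩
          intro u hu
          obtain ⟨o', ho', hn'⟩ := hC.1 u hu
          refine ⟨o', Finset.mem_erase.2 ⟨?_, ho'⟩, hn'.mono (by omega)⟩
          rintro rfl
          have : u ∈ U.filter (fun u => Near r u o') := Finset.mem_filter.2 ⟨hu, hn'⟩
          rw [h0] at this
          simp at this
        obtain ⟨O', U', k, hk, hO', hC2, hcnt, hch⟩ := ih _ _ _ hcardE hU hC' (by omega)
        rw [e1] at hC2 hcnt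
        exact ⟨O', U', k, by omega, by omega, hC2, hcnt, hch⟩
      · have h1 : (U.filter (fun u => Near r u o)).card = 1 := by omega
        rw [Finset.card_eq_one] at h1
        obtain ⟨x, hx⟩ := h1
        have hxm : x ∈ U ∧ Near r x o := by
          have : x ∈ U.filter (fun u => Near r u o) := by rw [hx]; simp
          exact Finset.mem_filter.1 this
        have hoth : ∀ u ∈ U, u ≠ x → ∃ o' ∈ O.erase o, Near r u o' := by
          intro u hu hux
          obtain ⟨o', ho', hn'⟩ := hC.1 u hu
          refine ⟨o', Finset.mem_erase.2 ⟨?_, ho'⟩, hn'⟩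
          rintro rfl
          have : u ∈ U.filter (fun u => Near r u o') := Finset.mem_filter.2 ⟨hu, hn'⟩
          rw [hx] at this
          exact hux (Finset.mem_singleton.1 this)
        obtain ⟨y, ⟨w, hw, hwx, hyw⟩, hcard, hprob⟩ := single_move hd hn hU hxm.1 (by
          intro u hu hux hnear
          obtain ⟨o', ho', hn'⟩ := hoth u hu hux
          rw [Finset.mem_erase] at ho'
          refine hC.2 o' ho'.2 o ho ho'.1 ?_
          exact ((hn'.symm.trans hnear).trans hxm.2).mono (by omega))
        have hC' : Clus (O.erase o) (r + 1) R (insert y (U.erase x)) := by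
          refine ⟨?_, fun o1 h1 o2 h2 => hC.2 o1 (Finset.mem_of_mem_erase h1) o2 (Finset.mem_of_mem_erase h2)⟩
          intro u hu
          rcases Finset.mem_insert.1 hu with rfl | hu
          · obtain ⟨o', ho', hn'⟩ := hoth w hw hwx
            exact ⟨o', ho', (hyw.trans hn').mono (by omega)⟩
          · rw [Finset.mem_erase] at hu
            obtain ⟨o', ho', hn'⟩ := hoth u hu.2 hu.1
            exact ⟨o', ho', hn'.mono (by omega)⟩
        obtain ⟨O', U', k, hk, hO', hC2, hcnt, hch⟩ := ih _ _ _ hcardE hcard hC' (by omega)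
        rw [e1] at hC2 hcnt
        exact ⟨O', U', k + 1, by omega, by omega, hC2, hcnt, _, ⟨by rw [hcard, hU], hprob⟩, hch⟩

lemma process {d n a r1 r2 K R : ℕ} (h12 : r1 ≤ r2)
    (hcl : ∀ (o : Pt d) (Q B : Conf d), 2 ≤ Q.card → (Q ∪ B).card = n → (∀ u ∈ Q, Near r1 u o) →
      (∀ b ∈ B, ¬ Near (r2 + 8 * n) b o) → ∃ V k, k ≤ K ∧ Good d a V ∧ (∀ u ∈ V, Near r2 u o) ∧
        Ch (HS d (cst d n r2)) k (Q ∪ B) (V ∪ B))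
    (hR : 2 * r2 + 8 * n + a ≤ R) (O2 : Conf d) : ∀ (O1 G Q : Conf d),
    (∀ o ∈ O2, ∀ o' ∈ O1, ¬ Near R o o') →
    (∀ o ∈ O2, ∀ o' ∈ O2, o ≠ o' → ¬ Near R o o') → Good d a G → (∀ u ∈ G, ∃ o ∈ O1, Near r2 u o) →
    (∀ u ∈ Q, ∃ o ∈ O2, Near r1 u o) → (∀ o ∈ O2, 2 ≤ (Q.filter (fun u => Near r1 u o)).card) →
    (G ∪ Q).card = n →
    ∃ V k, k ≤ O2.card * K ∧ Good d a V ∧ Ch (HS d (cst d n r2)) k (G ∪ Q) V := by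
  induction O2 using Finset.induction_on with
  | empty =>
    intro O1 G Q _ _ hG _ hQ _ _
    have : Q = ∅ := by
      rw [Finset.eq_empty_iff_forall_notMem]
      intro u hu
      obtain ⟨o, ho, _⟩ := hQ u hu
      simp at ho
    subst this
    exact ⟨G, 0, by simp, hG, by simp [Ch]⟩
  | insert o O2 hoO ih =>
    intro O1 G Q h1 h2 hG hG1 hQ hcnt hcard
    have hoin : o ∈ insert o O2 := Finset.mem_insert_self _ _
    have h2' : ∀ o' ∈ O2, ¬ Near R o o' := fun o' ho' =>
      h2 o hoin o' (Finset.mem_insert_of_mem ho') (by rintro rfl; exact hoO ho')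
    have hGo : ∀ b ∈ G, ¬ Near (r2 + 8 * n + a) b o := by
      intro b hb hn
      obtain ⟨o', ho', hn'⟩ := hG1 b hb
      exact h1 o hoin o' ho' ((hn.symm.trans hn').mono (by omega))
    have hQo : ∀ u ∈ Q, ¬ Near r1 u o → ∃ o' ∈ O2, Near r1 u o' := by
      intro u hu hn
      obtain ⟨o', ho', hn'⟩ := hQ u hu
      rcases Finset.mem_insert.1 ho' with rfl | ho'
      · exact absurd hn' hn
      · exact ⟨o', ho', hn'⟩
    have hset : Q.filter (fun u => Near r1 u o) ∪ (G ∪ Q.filter (fun u => ¬ Near r1 u o)) = G ∪ Q := by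
      ext u
      simp only [Finset.mem_union, Finset.mem_filter]
      tauto
    obtain ⟨V, k, hk, hV, hVo, hch⟩ := hcl o (Q.filter (fun u => Near r1 u o))
      (G ∪ Q.filter (fun u => ¬ Near r1 u o)) (hcnt o hoin) (by rw [hset, hcard])
      (fun u hu => (Finset.mem_filter.1 hu).2) (by
        intro b hb hn
        rcases Finset.mem_union.1 hb with hb | hb
        · exact hGo b hb (hn.mono (by omega))
        · rw [Finset.mem_filter] at hb
          obtain ⟨o', ho', hn'⟩ := hQo b hb.1 hb.2
          exact h2' o' ho' ((hn.symm.trans hn').mono (by omega)))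
    have hset2 : V ∪ (G ∪ Q.filter (fun u => ¬ Near r1 u o)) =
        (G ∪ V) ∪ Q.filter (fun u => ¬ Near r1 u o) := by
      ext u
      simp only [Finset.mem_union]
      tauto
    rw [hset, hset2] at hch
    obtain ⟨V', k', hk', hV', hch'⟩ := ih (insert o O1) (G ∪ V) (Q.filter (fun u => ¬ Near r1 u o)) (by
        intro o1 ho1 o' ho' hn
        rcases Finset.mem_insert.1 ho' with rfl | ho'
        · exact h2' o1 ho1 hn.symm
        · exact h1 o1 (Finset.mem_insert_of_mem ho1) o' ho' hn)
      (fun o1 ho1 o' ho' => h2 o1 (Finset.mem_insert_of_mem ho1) o' (Finset.mem_insert_of_mem ho'))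
      (hG.union hV (fun v hv x hx hn => hGo v hv ((hn.trans (hVo x hx)).mono (by omega)))) (by
        intro u hu
        rcases Finset.mem_union.1 hu with hu | hu
        · obtain ⟨o', ho', hn'⟩ := hG1 u hu
          exact ⟨o', Finset.mem_insert_of_mem ho', hn'⟩
        · exact ⟨o, Finset.mem_insert_self _ _, hVo u hu⟩)
      (fun u hu => hQo u (Finset.mem_filter.1 hu).1 (Finset.mem_filter.1 hu).2) (by
        intro o' ho'
        refine (hcnt o' (Finset.mem_insert_of_mem ho')).trans (Finset.card_le_card ?_)
        intro u hu
        simp only [Finset.mem_filter] at hu ⊢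
        exact ⟨⟨hu.1, fun hn => h2' o' ho' ((hn.symm.trans hu.2).mono (by omega))⟩, hu.2⟩)
      (by rw [hch.card, hcard])
    refine ⟨V', k + k', ?_, hV', hch.trans hch'⟩
    rw [Finset.card_insert_of_notMem hoO]
    nlinarith

lemma level {d n : ℕ} (hd : 5 ≤ d) (hn : 2 ≤ n) (a ρ : ℕ) : ∃ (F K : ℕ) (c : ℝ), ρ ≤ F ∧ 0 < c ∧
    ∀ U : Conf d, U.card = n → (∀ u ∈ U, ∀ u' ∈ U, Near F u u' → Near ρ u u') →
      ∃ V k, k ≤ K ∧ Good d a V ∧ Ch (HS d c) k U V := by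
  obtain ⟨r2, K, h12, hcl⟩ := cluster (d := d) (n := n) hd (by omega) a (ρ + n)
  refine ⟨2 * r2 + 8 * n + a, n + n * K, min (cst1 d n) (cst d n r2), by omega,
    lt_min (cst1_pos hd (by omega)) (cst_pos r2 hd (by omega)), ?_⟩
  intro U hU hgap
  obtain ⟨O, hO, hC⟩ := exists_clus U hgap
  rw [hU] at hO
  obtain ⟨O', U', k, hk, hO', hC', hcnt, hch⟩ := singles hd hn _ n O U ρ hO hU hC (by omega)
  have hU' : U'.card = n := by rw [hch.card, hU]
  obtain ⟨V, k', hk', hV, hch'⟩ := process h12 hcl le_rfl O' ∅ ∅ U' (by simp) hC'.2 Good.nil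
    (by simp) hC'.1 hcnt (by simpa using hU')
  rw [Finset.empty_union] at hch'
  refine ⟨V, k + k', ?_, hV, (hch.mono (HS.mono (min_le_left _ _))).trans
    (hch'.mono (HS.mono (min_le_right _ _)))⟩
  have := Nat.mul_le_mul_right K hO'
  omega

lemma all_levels {d n : ℕ} (hd : 5 ≤ d) (hn : 2 ≤ n) (a : ℕ) : ∃ (K : ℕ) (c : ℝ), 0 < c ∧
    ∀ U : Conf d, U.card = n → ∃ V k, k ≤ K ∧ Good d a V ∧ Ch (HS d c) k U V := by
  choose F K c hF hc h using fun ρ => level (d := d) (n := n) hd hn a ρ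
  let ρ : ℕ → ℕ := fun j => F^[j] 0
  have hs : ∀ j, ρ (j + 1) = F (ρ j) := fun j => Function.iterate_succ_apply' F j 0
  have hρ : Monotone ρ := monotone_nat_of_le_succ fun j => by rw [hs]; exact hF _
  obtain ⟨j0, _, hj0⟩ := Finset.exists_min_image (Finset.range (n * n + 1)) (fun j => c (ρ j)) ⟨0, by simp⟩
  refine ⟨∑ j ∈ Finset.range (n * n + 1), K (ρ j), c (ρ j0), hc _, ?_⟩
  intro U hU
  obtain ⟨j, hj, hgap⟩ := scale_gap ρ hρ U hU
  rw [hs] at hgap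
  have hjm : j ∈ Finset.range (n * n + 1) := Finset.mem_range.2 (by omega)
  obtain ⟨V, k, hk, hV, hch⟩ := h (ρ j) U hU hgap
  exact ⟨V, k, hk.trans (Finset.single_le_sum (f := fun j => K (ρ j)) (fun _ _ => Nat.zero_le _) hjm), hV,
    hch.mono (HS.mono (hj0 j hjm))⟩


end part5

section part6
open Classical

lemma Good.parts {d a : ℕ} {V : Conf d} (h : Good d a V) : ∃ P : Finset (Finset (Pt d)),
    (∀ A ∈ P, A ∈ Ref d) ∧ (∀ A ∈ P, ∀ B ∈ P, A ≠ B → ∀ x ∈ A, ∀ y ∈ B, ¬ Near a x y) ∧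
    P.biUnion id = V := by
  induction h with
  | nil => exact ⟨∅, by simp⟩
  | add V A hV hA hsep ih =>
    obtain ⟨P, hP, hPs, hPV⟩ := ih
    have hin : ∀ B ∈ P, ∀ x ∈ B, x ∈ V := fun B hB x hx => by
      rw [← hPV]; exact Finset.mem_biUnion.2 ⟨B, hB, hx⟩
    refine ⟨insert A P, ?_, ?_, ?_⟩
    · intro B hB
      rcases Finset.mem_insert.1 hB with rfl | hB
      · exact hA
      · exact hP B hB
    · intro B hB B' hB' hne x hx y hy hn
      rw [Finset.mem_insert] at hB hB'
      rcases hB with h1 | h1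
      · rcases hB' with h2 | h2
        · exact hne (h1.trans h2.symm)
        · exact hsep y (hin _ h2 y hy) x (h1 ▸ hx) hn.symm
      · rcases hB' with h2 | h2
        · exact hsep x (hin _ h1 x hx) y (h2 ▸ hy) hn
        · exact hPs B h1 B' h2 hne x hx y hy hn
    · rw [Finset.biUnion_insert, hPV, id, Finset.union_comm]

lemma ref_form {d : ℕ} {i1 : Fin d} (h : (i1 : ℕ) = 0) {A : Conf d} (hA : A ∈ Ref d) :
    ∃ x ∈ A, x + Pi.single i1 1 ∈ A ∧ (∀ u ∈ A, ∃ j : ℤ, 0 ≤ j ∧ j ≤ 2 ∧ u = x + Pi.single i1 j) ∧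
      (A.card = 2 ∨ A.card = 3) := by
  obtain ⟨x, hx⟩ := hA
  rw [e1v_eq i1 h] at hx
  have h2 : x + Pi.single i1 1 + Pi.single i1 1 = x + Pi.single i1 (2 : ℤ) := by
    rw [add_assoc, ← Pi.single_add]; norm_num
  have n1 : x ≠ x + Pi.single i1 (1 : ℤ) := by
    intro h; have := congrFun h i1; simp at this
  have n2 : x ≠ x + Pi.single i1 (2 : ℤ) := by
    intro h; have := congrFun h i1; simp at this
  have n3 : x + Pi.single i1 (1 : ℤ) ≠ x + Pi.single i1 (2 : ℤ) := by
    intro h; have := congrFun h i1; simp at this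
  rw [h2] at hx
  refine ⟨x, ?_, ?_, ?_, ?_⟩
  · rcases hx with rfl | rfl <;> simp
  · rcases hx with rfl | rfl <;> simp
  · intro u hu
    have : u = x ∨ u = x + Pi.single i1 (1 : ℤ) ∨ u = x + Pi.single i1 (2 : ℤ) := by
      rcases hx with rfl | rfl
      · simp only [Finset.mem_insert, Finset.mem_singleton] at hu
        tauto
      · simp only [Finset.mem_insert, Finset.mem_singleton] at hu
        tauto
    rcases this with rfl | rfl | rfl
    · exact ⟨0, by norm_num, by norm_num, by simp⟩
    · exact ⟨1, by norm_num, by norm_num, rfl⟩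
    · exact ⟨2, by norm_num, by norm_num, rfl⟩
  · rcases hx with rfl | rfl
    · left; exact Finset.card_pair n1
    · right; exact Finset.card_eq_three.2 ⟨_, _, _, n1, n2, n3, rfl⟩

lemma self_loop {d n a : ℕ} (hd : 5 ≤ d) (hn : 0 < n) (ha : 8 * n + 2 ≤ a) {V : Conf d}
    (hV : Good d a V) (hcard : V.card = n) : HS d (cst d n 2) V V := by
  obtain ⟨P, hP, hPs, hPV⟩ := hV.parts
  have hVne : V.Nonempty := by rw [← Finset.card_pos]; omega
  obtain ⟨v, hv⟩ := hVne
  rw [← hPV, Finset.mem_biUnion] at hv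
  obtain ⟨A, hAP, -⟩ := hv
  let i1 : Fin d := ⟨0, by omega⟩
  let i2 : Fin d := ⟨1, by omega⟩
  have h12 : i2 ≠ i1 := by simp [i1, i2]
  obtain ⟨x, hxA, hxA1, hform, -⟩ := ref_form (i1 := i1) rfl (hP A hAP)
  have hAV : ∀ u ∈ A, u ∈ V := fun u hu => by
    rw [← hPV]; exact Finset.mem_biUnion.2 ⟨A, hAP, hu⟩
  have hdich : ∀ u ∈ V, u ∈ A ∨ ¬ Near (2 + 8 * n) u x := by
    intro u hu
    rw [← hPV, Finset.mem_biUnion] at hu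
    obtain ⟨B, hB, huB⟩ := hu
    by_cases hBA : B = A
    · exact Or.inl (hBA ▸ huB)
    · exact Or.inr fun hn => hPs B hB A hAP hBA u huB x hxA (hn.mono (by omega))
  have hmem : ∀ u ∈ V, Near 2 u x → u ∈ A := fun u hu hn =>
    (hdich u hu).resolve_right fun h => h (hn.mono (by omega))
  have key := main_move (U := V) (x := x) (y := x) (o := x) (r := 2) hd hn hcard i2 (by
      intro u hu
      refine (hdich u hu).imp_left ?_
      intro huA
      obtain ⟨j, hj0, hj2, rfl⟩ := hform u huA
      intro i
      by_cases hi : i = i1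
      · subst hi; simp [abs_of_nonneg hj0]; exact hj2
      · simp [hi]) (hAV x hxA) (near_self _ _) (near_self _ _) (by
      intro u hu hn _
      obtain ⟨j, hj0, hj2, rfl⟩ := hform u (hmem u hu hn)
      simp [h12]) (by
      intro u hu hux hn hcol
      obtain ⟨j, hj0, hj2, rfl⟩ := hform u (hmem u hu hn)
      have := hcol i1 h12.symm
      have hj : j = 0 := by simpa using this
      subst hj
      simp at hux) (single_mem_Dset i1 (Or.inl rfl)) (by
      refine Finset.mem_erase.2 ⟨?_, hAV _ hxA1⟩
      intro h
      have := congrFun h i1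
      simp at this)
  rw [Finset.insert_erase (hAV x hxA)] at key
  exact ⟨rfl, key.2⟩

lemma dist0_ge {d a : ℕ} {x y : Pt d} (h : ¬ Near a x y) : (a : ℝ) ≤ dist0 d x y := by
  unfold Near at h
  push Not at h
  obtain ⟨i, hi⟩ := h
  have h1 : (a : ℝ) ≤ |(x i : ℝ) - y i| := by
    have : (a : ℝ) < |(x i : ℝ) - y i| := by exact_mod_cast hi
    exact this.le
  refine h1.trans ?_
  unfold dist0
  apply Real.abs_le_sqrt
  exact Finset.single_le_sum (f := fun i => ((x i : ℝ) - y i) ^ 2) (fun _ _ => sq_nonneg _) (Finset.mem_univ i)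

lemma good_inU {d n a : ℕ} (hd : 5 ≤ d) (hn : 4 ≤ n) (ha : 8 ≤ a) {V : Conf d}
    (hV : Good d a V) (hcard : V.card = n) : InU d n (a : ℝ) 1 V := by
  obtain ⟨P, hP, hPs, hPV⟩ := hV.parts
  let i1 : Fin d := ⟨0, by omega⟩
  let C : Fin P.card → Finset (Pt d) := fun i => (P.equivFin.symm i : Finset (Pt d))
  have hC : ∀ i, C i ∈ P := fun i => (P.equivFin.symm i).2
  have hCinj : ∀ i j, i ≠ j → C i ≠ C j := fun i j hij h =>
    hij (P.equivFin.symm.injective (Subtype.ext h))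
  have hCU : Finset.univ.biUnion C = V := by
    rw [← hPV]
    ext u
    simp only [Finset.mem_biUnion, Finset.mem_univ, true_and, id]
    constructor
    · rintro ⟨i, hi⟩; exact ⟨C i, hC i, hi⟩
    · rintro ⟨A, hA, hu⟩
      exact ⟨P.equivFin ⟨A, hA⟩, by simpa [C] using hu⟩
  have hothers : ∀ i, ∀ y ∈ others d C i, ∃ j, i ≠ j ∧ y ∈ C j := by
    intro i y hy
    obtain ⟨j, -, hj⟩ := Finset.mem_biUnion.1 hy
    by_cases hji : j = i
    · simp [hji] at hj
    · rw [if_neg hji] at hj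
      exact ⟨j, fun h => hji h.symm, hj⟩
  have hcards : ∀ i, (C i).card = 2 ∨ (C i).card = 3 := fun i => by
    obtain ⟨_, _, _, _, h⟩ := ref_form (i1 := i1) rfl (hP _ (hC i)); exact h
  have hCne : ∀ i, (C i).Nonempty := fun i => by
    rw [← Finset.card_pos]; rcases hcards i with h | h <;> omega
  have hothne : ∀ i, (others d C i).Nonempty := by
    intro i
    have : ∃ u ∈ V, u ∉ C i := by
      by_contra! hsub
      have := Finset.card_le_card (show V ⊆ C i from hsub)
      rcases hcards i with h | h <;> omega
    obtain ⟨u, hu, hui⟩ := this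
    rw [← hCU] at hu
    obtain ⟨j, hj, huj⟩ := Finset.mem_biUnion.1 hu
    refine ⟨u, Finset.mem_biUnion.2 ⟨j, hj, ?_⟩⟩
    rw [if_neg]
    · exact huj
    · rintro rfl; exact hui huj
  have hset : ∀ i, (a : ℝ) ≤ setDist d (C i) (others d C i) := by
    intro i
    obtain ⟨x, hx⟩ := hCne i
    obtain ⟨y, hy⟩ := hothne i
    refine le_csInf ⟨_, x, hx, y, hy, rfl⟩ ?_
    rintro r ⟨x, hx, y, hy, rfl⟩
    obtain ⟨j, hij, hyj⟩ := hothers i y hy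
    exact dist0_ge (hPs _ (hC i) _ (hC j) (hCinj i j hij) x hx y hyj)
  refine ⟨hcard, ⟨P.card, C⟩, ⟨hCne, ?_, hCU⟩, hcards, ?_, ?_⟩
  · intro i j hij
    rw [Finset.disjoint_left]
    intro u hu hu'
    exact hPs _ (hC i) _ (hC j) (hCinj i j hij) u hu u hu' (near_self _ _)
  · have : V.Nonempty := by rw [← Finset.card_pos]; omega
    obtain ⟨v, hv⟩ := this
    rw [← hCU] at hv
    obtain ⟨j, -, -⟩ := Finset.mem_biUnion.1 hv
    haveI : Nonempty (Fin P.card) := ⟨j⟩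
    exact le_ciInf hset
  · intro i
    rw [one_mul]
    have hlog : (2 : ℝ) ≤ Real.log (setDist d (C i) (others d C i)) := by
      have h8 : (8 : ℝ) ≤ setDist d (C i) (others d C i) :=
        le_trans (by exact_mod_cast ha) (hset i)
      rw [Real.le_log_iff_exp_le (by linarith)]
      refine le_trans ?_ h8
      have h1 := Real.exp_one_lt_d9
      have h0 := Real.exp_pos 1
      have : Real.exp 2 = Real.exp 1 * Real.exp 1 := by rw [← Real.exp_add]; norm_num
      rw [this]
      nlinarith
    refine le_trans ?_ hlog
    obtain ⟨x, hx, -, hform, -⟩ := ref_form (i1 := i1) rfl (hP _ (hC i))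
    refine csSup_le ⟨_, x, hx, x, hx, rfl⟩ ?_
    rintro r ⟨u, hu, w, hw, rfl⟩
    obtain ⟨j, hj0, hj2, rfl⟩ := hform u hu
    obtain ⟨l, hl0, hl2, rfl⟩ := hform w hw
    have hsum : ∑ m, (((x + Pi.single i1 j : Pt d) m : ℝ) - ((x + Pi.single i1 l : Pt d) m : ℝ)) ^ 2
        = ((j : ℝ) - l) ^ 2 := by
      rw [Finset.sum_eq_single i1]
      · simp
      · intro b _ hb; simp [hb]
      · simp
    unfold dist0
    rw [hsum, Real.sqrt_sq_eq_abs, abs_le]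
    have a1 : (0 : ℝ) ≤ j := by exact_mod_cast hj0
    have a2 : (j : ℝ) ≤ 2 := by exact_mod_cast hj2
    have a3 : (0 : ℝ) ≤ l := by exact_mod_cast hl0
    have a4 : (l : ℝ) ≤ 2 := by exact_mod_cast hl2
    constructor <;> linarith

lemma Ch.path {α : Type*} {R : α → α → Prop} {k : ℕ} : ∀ {a b : α}, Ch R k a b →
    ∃ u : ℕ → α, u 0 = a ∧ u k = b ∧ ∀ s, s < k → R (u s) (u (s + 1)) := by
  induction k with
  | zero => rintro a b rfl; exact ⟨fun _ => a, rfl, rfl, fun s hs => by omega⟩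
  | succ k ih =>
    rintro a b ⟨c, hc, h⟩
    obtain ⟨u, h0, hk, hu⟩ := ih h
    refine ⟨fun s => Nat.casesOn s a u, rfl, hk, ?_⟩
    intro s hs
    cases s with
    | zero => simpa [h0] using hc
    | succ s => exact hu s (by omega)

lemma Ch.loop {α : Type*} {R : α → α → Prop} {a : α} (h : R a a) (k : ℕ) : Ch R k a a := by
  induction k with
  | zero => rfl
  | succ k ih => exact ⟨a, h, ih⟩

lemma law_ge {d f : ℕ} {c : ℝ} (hc : 0 < c) {U V : Conf d} (h : Ch (HS d c) f U V)
    {μ : Measure (ℕ → Conf d)} (hμ : IsHATLaw d U μ) {S : Set (ℕ → Conf d)}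
    (hS : ∀ ω : ℕ → Conf d, ω f = V → ω ∈ S) : ENNReal.ofReal (c ^ f) ≤ μ S := by
  obtain ⟨u, h0, hf, hu⟩ := h.path
  have h1 := hμ.2 f u
  rw [if_pos h0, one_mul] at h1
  have h2 : μ {ω | ∀ s ≤ f, ω s = u s} ≤ μ S :=
    measure_mono fun ω hω => hS ω ((hω f le_rfl).trans hf)
  refine le_trans ?_ h2
  rw [h1, ENNReal.ofReal_pow hc.le]
  calc ENNReal.ofReal c ^ f = ∏ s ∈ Finset.range f, ENNReal.ofReal c := by simp
    _ ≤ _ := Finset.prod_le_prod' fun s hs =>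
      ENNReal.ofReal_le_ofReal (hu s (Finset.mem_range.1 hs)).2

lemma form_aux (d n : ℕ) (hd : 5 ≤ d) (hn : 4 ≤ n) (a : ℕ) (ha : 8 * n + 2 ≤ a) :
      ∃ (f : ℕ) (g : ℝ), 0 < g ∧
        ∀ U : Conf d, U.card = n →
          ∀ μ : Measure (ℕ → Conf d), IsHATLaw d U μ →
            ENNReal.ofReal g ≤ μ {ω | InU d n (a : ℝ) 1 (ω f)} := by
  obtain ⟨K, c, hc, h⟩ := all_levels (d := d) (n := n) hd (by omega) a
  have hc' : 0 < min c (cst d n 2) := lt_min hc (cst_pos 2 hd (by omega))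
  refine ⟨K, min c (cst d n 2) ^ K, pow_pos hc' K, ?_⟩
  intro U hU μ hμ
  obtain ⟨V, k, hk, hV, hch⟩ := h U hU
  have hVc : V.card = n := by rw [hch.card, hU]
  have hch' := (hch.mono (HS.mono (min_le_left c (cst d n 2)))).trans
    (Ch.loop (HS.mono (min_le_right c (cst d n 2)) _ _ (self_loop hd (by omega) ha hV hVc)) (K - k))
  rw [show k + (K - k) = K by omega] at hch'
  refine law_ge hc' hch' hμ ?_
  intro ω hω
  show InU d n (a : ℝ) 1 (ω K)
  rw [hω]
  exact good_inU hd hn (by omega) hV hVc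


end part6

/-- **Formation of DOT configurations.** For `d ≥ 5`, `n ≥ 4` and all sufficiently large
`a ∈ ℤ_{≥2}`, there are `f ∈ ℤ_{≥0}` and `g > 0` such that, from any `n`-element
configuration `U ⊂ ℤ^d`, `P_U(U_f ∈ 𝒰_{d,n}(a,1)) ≥ g`. -/
theorem form_dot (d n : ℕ) (hd : 5 ≤ d) (hn : 4 ≤ n) :
    ∃ a0 : ℕ, ∀ a : ℕ, 2 ≤ a → a0 ≤ a →
      ∃ (f : ℕ) (g : ℝ), 0 < g ∧
        ∀ U : Conf d, U.card = n →
          ∀ μ : Measure (ℕ → Conf d), IsHATLaw d U μ →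
            ENNReal.ofReal g ≤ μ {ω | InU d n (a : ℝ) 1 (ω f)} := by
  exact ⟨8 * n + 2, fun a _ ha => form_aux d n hd hn a ha⟩

end HATFormal
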